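/- arXiv:2008.02455 — 9 statements merged into one kernel-verified Lean document; each statement's English description precedes it below -/
import Mathlib

section
/- For the IMH chain, for every x ∈ ℝ^d and every n ≥ 1, ‖P^n(x,·) − π‖_TV ≥ R(x)^n, where R(x) is the rejection probability at x. -/
open MeasureTheory

/-- Total variation distance between two measures. -/
noncomputable def tvDist {X : Type*} [MeasurableSpace X] (μ ν : Measure X) : ℝ :=
  ⨆ A : {s : Set X // MeasurableSet s}, |(μ A.1).toReal - (ν A.1).toReal|

/-- `n`-step kernel (n-fold composition) of a Markov kernel. -/
noncomputable def kiter {X : Type*} [MeasurableSpace X] (P : X → Measure X) : ℕ → X → Measure X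
  | 0, x => Measure.dirac x
  | (n + 1), x => (kiter P n x).bind P

/-- Weight function `w = π / p`. -/
noncomputable def imhW {X : Type*} (tgt prp : X → ℝ) (x : X) : ℝ := tgt x / prp x

/-- Rejection probability of the IMH chain at `x`. -/
noncomputable def imhR {X : Type*} [MeasureSpace X] (tgt prp : X → ℝ) (x : X) : ℝ :=
  ∫ y, (1 - min (imhW tgt prp y / imhW tgt prp x) 1) * prp y

/-- The IMH transition kernel. -/
noncomputable def imhP {X : Type*} [MeasureSpace X] (tgt prp : X → ℝ) (x : X) : Measure X :=
  (volume : Measure X).withDensity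
      (fun y => ENNReal.ofReal (prp y * min (imhW tgt prp y / imhW tgt prp x) 1))
    + ENNReal.ofReal (imhR tgt prp x) • Measure.dirac x

/-- The measure with density `f` with respect to Lebesgue measure. -/
noncomputable def densityMeasure {X : Type*} [MeasureSpace X] (f : X → ℝ) : Measure X :=
  (volume : Measure X).withDensity fun y => ENNReal.ofReal (f y)

/-- Worst-case total variation distance from stationarity after `n` steps of the IMH chain. -/
noncomputable def dIMH {X : Type*} [MeasureSpace X] (tgt prp : X → ℝ) (n : ℕ) : ℝ :=
  ⨆ x, tvDist (kiter (imhP tgt prp) n x) (densityMeasure tgt)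


section helpers

variable {d : ℕ} {tgt prp : (Fin d → ℝ) → ℝ}

theorem imh_minmeas (ht : Continuous tgt) (hp : Continuous prp) :
    Measurable (fun q : (Fin d → ℝ) × (Fin d → ℝ) =>
      min (imhW tgt prp q.2 / imhW tgt prp q.1) 1) := by
  have h1 := ht.measurable
  have h2 := hp.measurable
  unfold imhW
  fun_prop

theorem imh_meas (ht : Continuous tgt) (hp : Continuous prp) : Measurable (imhP tgt prp) := by
  have hm := imh_minmeas ht hp
  have h2 := hp.measurable
  have hR : Measurable (imhR tgt prp) := by
    have : StronglyMeasurable (fun q : (Fin d → ℝ) × (Fin d → ℝ) =>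
      (1 - min (imhW tgt prp q.2 / imhW tgt prp q.1) 1) * prp q.2) := by
      apply Measurable.stronglyMeasurable
      exact (measurable_const.sub hm).mul (h2.comp measurable_snd)
    exact (this.integral_prod_right').measurable
  refine Measure.measurable_of_measurable_coe _ fun s hs => ?_
  have hF : Measurable (fun q : (Fin d → ℝ) × (Fin d → ℝ) =>
      ENNReal.ofReal (prp q.2 * min (imhW tgt prp q.2 / imhW tgt prp q.1) 1)) :=
    ((h2.comp measurable_snd).mul hm).ennreal_ofReal
  simp only [imhP, Measure.add_apply, Measure.smul_apply, smul_eq_mul, withDensity_apply _ hs,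
    Measure.dirac_apply' _ hs]
  refine Measurable.add ?_ ?_
  · exact hF.lintegral_prod_right' (ν := volume.restrict s)
  · exact hR.ennreal_ofReal.mul (measurable_one.indicator hs)

theorem imh_w_nonneg (h1 : ∀ x, 0 ≤ tgt x) (h2 : ∀ x, 0 < prp x) (x : Fin d → ℝ) :
    0 ≤ imhW tgt prp x := div_nonneg (h1 x) (h2 x).le

theorem imh_R_nonneg (h2 : ∀ x, 0 < prp x) (x : Fin d → ℝ) :
    0 ≤ imhR tgt prp x :=
  integral_nonneg fun y => mul_nonneg (sub_nonneg.2 (min_le_right _ _)) (h2 y).le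

theorem imh_prob (ht : Continuous tgt) (hp : Continuous prp)
    (h1 : ∀ x, 0 ≤ tgt x) (h2 : ∀ x, 0 < prp x)
    (hi : (∫ x, prp x) = 1) (x : Fin d → ℝ) : IsProbabilityMeasure (imhP tgt prp x) := by
  have hint : Integrable prp := by
    by_contra h
    rw [integral_undef h] at hi
    exact zero_ne_one hi
  have hm : Measurable (fun y => min (imhW tgt prp y / imhW tgt prp x) 1) :=
    (imh_minmeas ht hp).comp (measurable_const.prodMk measurable_id)
  have hmn : ∀ y, 0 ≤ min (imhW tgt prp y / imhW tgt prp x) 1 := fun y =>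
    le_min (div_nonneg (imh_w_nonneg h1 h2 y) (imh_w_nonneg h1 h2 x)) zero_le_one
  have hia : Integrable (fun y => prp y * min (imhW tgt prp y / imhW tgt prp x) 1) := by
    refine hint.mono' (hp.measurable.mul hm).aestronglyMeasurable (Filter.Eventually.of_forall ?_)
    intro y
    rw [Real.norm_of_nonneg (mul_nonneg (h2 y).le (hmn y))]
    exact mul_le_of_le_one_right (h2 y).le (min_le_right _ _)
  have hR : imhR tgt prp x
      = 1 - ∫ y, prp y * min (imhW tgt prp y / imhW tgt prp x) 1 := by
    have hs := integral_sub hint hia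
    rw [hi] at hs
    rw [← hs, imhR]
    congr 1
    ext y
    ring
  constructor
  simp only [imhP, Measure.add_apply, Measure.smul_apply, smul_eq_mul,
    withDensity_apply _ MeasurableSet.univ, Measure.restrict_univ, measure_univ, mul_one]
  have hn : ∀ y, 0 ≤ prp y * min (imhW tgt prp y / imhW tgt prp x) 1 :=
    fun y => mul_nonneg (h2 y).le (hmn y)
  rw [← ofReal_integral_eq_lintegral_ofReal hia (Filter.Eventually.of_forall hn),
    ← ENNReal.ofReal_add (integral_nonneg hn) (imh_R_nonneg h2 x), hR]
  simp

theorem imh_kiter_prob (ht : Continuous tgt) (hp : Continuous prp)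
    (h1 : ∀ x, 0 ≤ tgt x) (h2 : ∀ x, 0 < prp x)
    (hi : (∫ x, prp x) = 1) (x : Fin d → ℝ) (n : ℕ) :
    IsProbabilityMeasure (kiter (imhP tgt prp) n x) := by
  induction n with
  | zero => simp only [kiter]; infer_instance
  | succ n ih =>
    constructor
    simp only [kiter]
    rw [Measure.bind_apply MeasurableSet.univ (imh_meas ht hp).aemeasurable]
    have : ∀ y, imhP tgt prp y Set.univ = 1 := fun y =>
      (imh_prob ht hp h1 h2 hi y).measure_univ
    simp [this]

theorem imh_kiter_ge (ht : Continuous tgt) (hp : Continuous prp)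
    (x : Fin d → ℝ) (n : ℕ) :
    ENNReal.ofReal (imhR tgt prp x) ^ n ≤ kiter (imhP tgt prp) n x {x} := by
  induction n with
  | zero => simp [kiter]
  | succ n ih =>
    simp only [kiter]
    rw [Measure.bind_apply (measurableSet_singleton x) (imh_meas ht hp).aemeasurable]
    calc ENNReal.ofReal (imhR tgt prp x) ^ (n + 1)
        = ENNReal.ofReal (imhR tgt prp x) * ENNReal.ofReal (imhR tgt prp x) ^ n := pow_succ' _ _
      _ ≤ imhP tgt prp x {x} * kiter (imhP tgt prp) n x {x} := by
          refine mul_le_mul' ?_ ih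
          simp [imhP]
      _ = ∫⁻ y in {x}, imhP tgt prp y {x} ∂(kiter (imhP tgt prp) n x) := by
          rw [lintegral_singleton]
      _ ≤ _ := setLIntegral_le_lintegral _ _

end helpers

/-- `‖Pⁿ(x,·) − π‖_TV ≥ R(x)ⁿ` for every `x` and every `n ≥ 1`. -/
theorem imh_tv_lower_bound_rejection (d : ℕ) (tgt prp : (Fin d → ℝ) → ℝ)
    (htgt_cont : Continuous tgt) (hprp_cont : Continuous prp)
    (htgt_nonneg : ∀ x, 0 ≤ tgt x) (hprp_pos : ∀ x, 0 < prp x)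
    (htgt_int : (∫ x, tgt x) = 1) (hprp_int : (∫ x, prp x) = 1) :
    ∀ (x : Fin d → ℝ) (n : ℕ), 1 ≤ n →
      (imhR tgt prp x) ^ n ≤ tvDist (kiter (imhP tgt prp) n x) (densityMeasure tgt) := by
  intro x n hn
  have htint : Integrable tgt := by
    by_contra h
    rw [integral_undef h] at htgt_int
    exact zero_ne_one htgt_int
  have hpi : IsProbabilityMeasure (densityMeasure tgt) := by
    constructor
    rw [densityMeasure, withDensity_apply _ MeasurableSet.univ, Measure.restrict_univ,
      ← ofReal_integral_eq_lintegral_ofReal htint (Filter.Eventually.of_forall htgt_nonneg),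
      htgt_int, ENNReal.ofReal_one]
  have hk := imh_kiter_prob htgt_cont hprp_cont htgt_nonneg hprp_pos hprp_int x n
  have hbdd : BddAbove (Set.range fun A : {s : Set (Fin d → ℝ) // MeasurableSet s} =>
      |((kiter (imhP tgt prp) n x) A.1).toReal - ((densityMeasure tgt) A.1).toReal|) := by
    refine ⟨1, ?_⟩
    rintro _ ⟨A, rfl⟩
    have a1 : ((kiter (imhP tgt prp) n x) A.1).toReal ≤ 1 := measureReal_le_one
    have a2 : ((densityMeasure tgt) A.1).toReal ≤ 1 := measureReal_le_one
    have a3 : 0 ≤ ((kiter (imhP tgt prp) n x) A.1).toReal := ENNReal.toReal_nonneg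
    have a4 : 0 ≤ ((densityMeasure tgt) A.1).toReal := ENNReal.toReal_nonneg
    exact abs_le.2 ⟨by linarith, by linarith⟩
  rcases d with _ | d
  · have hx : tgt x ≠ 0 := by
      intro h0
      have : tgt = fun _ => 0 := by
        ext y
        rw [Subsingleton.elim y x, h0]
      rw [this] at htgt_int
      simp at htgt_int
    have hw : imhW tgt prp x ≠ 0 := div_ne_zero hx (hprp_pos x).ne'
    have hR : imhR tgt prp x = 0 := by
      have : (fun y => (1 - min (imhW tgt prp y / imhW tgt prp x) 1) * prp y) = fun _ => 0 := by
        ext y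
        rw [Subsingleton.elim y x, div_self hw]
        simp
      rw [imhR, this]
      simp
    rw [hR, zero_pow (by omega)]
    exact Real.iSup_nonneg fun A => abs_nonneg _
  · refine le_trans ?_ (le_ciSup hbdd ⟨{x}, measurableSet_singleton x⟩)
    have h0 : densityMeasure tgt {x} = 0 :=
      withDensity_absolutelyContinuous _ _ (measure_singleton x)
    have hge := imh_kiter_ge htgt_cont hprp_cont x n
    have := ENNReal.toReal_mono (measure_ne_top _ _) hge
    rw [ENNReal.toReal_pow, ENNReal.toReal_ofReal (imh_R_nonneg hprp_pos x)] at this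
    simp only [h0, ENNReal.toReal_zero, sub_zero]
    exact this.trans (le_abs_self _)
end

section
/- Suppose w* = sup_x w(x) < ∞ and there exists x* ∈ ℝ^d with w(x*) = w*. Then for every n ≥ 1, the n-step IMH kernel started at x* satisfies, as an identity of probability measures, P^n(x*, ·) = (1 − 1/w*)^n · δ_{x*} + (1 − (1 − 1/w*)^n) · π, where δ_{x*} is the point mass at x*; consequently ‖P^n(x*,·) − π‖_TV = (1 − 1/w*)^n. -/
open MeasureTheory

section helpers
variable {d : ℕ} {tgt prp : (Fin d → ℝ) → ℝ}

lemma aux_meas_w (h1 : Continuous tgt) (h2 : Continuous prp) : Measurable (imhW tgt prp) :=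
  h1.measurable.div h2.measurable

lemma aux_meas_acc (h1 : Continuous tgt) (h2 : Continuous prp) :
    Measurable (fun z : (Fin d → ℝ) × (Fin d → ℝ) =>
      ENNReal.ofReal (prp z.2 * min (imhW tgt prp z.2 / imhW tgt prp z.1) 1)) := by
  have hw := aux_meas_w h1 h2
  have := h2.measurable
  fun_prop

lemma aux_meas_R (h1 : Continuous tgt) (h2 : Continuous prp) :
    Measurable (imhR tgt prp) := by
  have hw := aux_meas_w h1 h2
  have h3 := h2.measurable
  have h : Measurable (fun z : (Fin d → ℝ) × (Fin d → ℝ) =>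
      (1 - min (imhW tgt prp z.2 / imhW tgt prp z.1) 1) * prp z.2) := by fun_prop
  exact (h.stronglyMeasurable.integral_prod_right').measurable

lemma aux_P_apply (x : Fin d → ℝ) {A : Set (Fin d → ℝ)} (hA : MeasurableSet A) :
    imhP tgt prp x A =
      (∫⁻ y in A, ENNReal.ofReal (prp y * min (imhW tgt prp y / imhW tgt prp x) 1))
        + ENNReal.ofReal (imhR tgt prp x) * A.indicator 1 x := by
  simp [imhP, withDensity_apply _ hA, Measure.dirac_apply' _ hA]

lemma aux_meas_P (h1 : Continuous tgt) (h2 : Continuous prp) :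
    Measurable (imhP tgt prp) := by
  refine Measure.measurable_of_measurable_coe _ fun A hA => ?_
  simp_rw [aux_P_apply _ hA]
  refine Measurable.add ?_ ?_
  · exact (aux_meas_acc h1 h2).lintegral_prod_right'
  · exact (aux_meas_R h1 h2).ennreal_ofReal.mul (measurable_one.indicator hA)

lemma aux_total (h1 : Continuous tgt) (h2 : Continuous prp) (h3 : ∀ x, 0 ≤ tgt x)
    (h4 : ∀ x, 0 < prp x) (hi : (∫ x, prp x) = 1) (x : Fin d → ℝ) :
    (∫⁻ y, ENNReal.ofReal (prp y * min (imhW tgt prp y / imhW tgt prp x) 1))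
      + ENNReal.ofReal (imhR tgt prp x) = 1 := by
  have hint : Integrable prp := by
    by_contra h
    rw [integral_undef h] at hi
    exact zero_ne_one hi
  have hw := aux_meas_w h1 h2
  have hwn : ∀ y, 0 ≤ imhW tgt prp y := fun y => div_nonneg (h3 y) (h4 y).le
  have hmn : ∀ y, 0 ≤ min (imhW tgt prp y / imhW tgt prp x) 1 := fun y =>
    le_min (div_nonneg (hwn y) (hwn x)) zero_le_one
  have hm1 : ∀ y, min (imhW tgt prp y / imhW tgt prp x) 1 ≤ 1 := fun y => min_le_right _ _
  have hm := h2.measurable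
  have hR : ENNReal.ofReal (imhR tgt prp x) = ∫⁻ y, ENNReal.ofReal
      ((1 - min (imhW tgt prp y / imhW tgt prp x) 1) * prp y) := by
    unfold imhR
    apply ofReal_integral_eq_lintegral_ofReal
    · refine hint.mono' (by fun_prop) (ae_of_all _ fun y => ?_)
      rw [Real.norm_eq_abs, abs_of_nonneg (mul_nonneg (by linarith [hm1 y]) (h4 y).le)]
      nlinarith [hmn y, h4 y]
    · exact ae_of_all _ fun y => mul_nonneg (by linarith [hm1 y]) (h4 y).le
  rw [hR, ← lintegral_add_left (by fun_prop)]
  have : ∀ y, ENNReal.ofReal (prp y * min (imhW tgt prp y / imhW tgt prp x) 1) + ENNReal.ofReal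
      ((1 - min (imhW tgt prp y / imhW tgt prp x) 1) * prp y) = ENNReal.ofReal (prp y) := by
    intro y
    rw [← ENNReal.ofReal_add (mul_nonneg (h4 y).le (hmn y))
      (mul_nonneg (by linarith [hm1 y]) (h4 y).le)]
    congr 1; ring
  simp_rw [this]
  rw [← ofReal_integral_eq_lintegral_ofReal hint (ae_of_all _ fun y => (h4 y).le), hi]
  simp

lemma aux_half (h3 : ∀ x, 0 ≤ tgt x) (h4 : ∀ x, 0 < prp x) (x y : Fin d → ℝ) :
    tgt x * (prp y * min (imhW tgt prp y / imhW tgt prp x) 1)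
      = prp x * prp y * min (imhW tgt prp y) (imhW tgt prp x) := by
  have hwn : ∀ y, 0 ≤ imhW tgt prp y := fun y => div_nonneg (h3 y) (h4 y).le
  have ht : tgt x = prp x * imhW tgt prp x := by
    unfold imhW; field_simp [(h4 x).ne']
  rw [ht]
  rcases (hwn x).eq_or_lt with h | h
  · rw [← h, min_eq_right (hwn y)]; simp
  · have : imhW tgt prp x * min (imhW tgt prp y / imhW tgt prp x) 1
      = min (imhW tgt prp y) (imhW tgt prp x) := by
      rw [mul_min_of_nonneg _ _ h.le, mul_div_cancel₀ _ h.ne', mul_one]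
    rw [← this]; ring

lemma aux_balance (h3 : ∀ x, 0 ≤ tgt x) (h4 : ∀ x, 0 < prp x) (x y : Fin d → ℝ) :
    ENNReal.ofReal (tgt x) * ENNReal.ofReal (prp y * min (imhW tgt prp y / imhW tgt prp x) 1)
      = ENNReal.ofReal (tgt y)
        * ENNReal.ofReal (prp x * min (imhW tgt prp x / imhW tgt prp y) 1) := by
  rw [← ENNReal.ofReal_mul (h3 x), ← ENNReal.ofReal_mul (h3 y), aux_half h3 h4, aux_half h3 h4,
    min_comm, mul_comm (prp x)]

lemma aux_inv (h1 : Continuous tgt) (h2 : Continuous prp) (h3 : ∀ x, 0 ≤ tgt x)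
    (h4 : ∀ x, 0 < prp x) (hi : (∫ x, prp x) = 1) :
    (densityMeasure tgt).bind (imhP tgt prp) = densityMeasure tgt := by
  have hP := aux_meas_P h1 h2
  have hacc := aux_meas_acc h1 h2
  have hR := aux_meas_R h1 h2
  have ht := h1.measurable
  ext A hA
  rw [Measure.bind_apply hA hP.aemeasurable]
  have hPA : Measurable fun x => imhP tgt prp x A := (Measure.measurable_coe hA).comp hP
  unfold densityMeasure
  rw [lintegral_withDensity_eq_lintegral_mul _ (by fun_prop) hPA, withDensity_apply _ hA]
  simp only [Pi.mul_apply]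
  simp_rw [aux_P_apply _ hA, mul_add]
  have hind : Measurable (fun x => ENNReal.ofReal (tgt x) * (ENNReal.ofReal (imhR tgt prp x) *
      A.indicator (1 : (Fin d → ℝ) → ENNReal) x)) :=
    ht.ennreal_ofReal.mul (hR.ennreal_ofReal.mul (measurable_one.indicator hA))
  rw [lintegral_add_right _ hind]
  have e1 : (∫⁻ x, ENNReal.ofReal (tgt x) *
      ∫⁻ y in A, ENNReal.ofReal (prp y * min (imhW tgt prp y / imhW tgt prp x) 1))
      = ∫⁻ y in A, ENNReal.ofReal (tgt y) *
        ∫⁻ x, ENNReal.ofReal (prp x * min (imhW tgt prp x / imhW tgt prp y) 1) := by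
    have s1 : ∀ x, ENNReal.ofReal (tgt x) *
      (∫⁻ y in A, ENNReal.ofReal (prp y * min (imhW tgt prp y / imhW tgt prp x) 1))
      = ∫⁻ y in A, ENNReal.ofReal (tgt x) *
        ENNReal.ofReal (prp y * min (imhW tgt prp y / imhW tgt prp x) 1) := fun x =>
      (lintegral_const_mul _ (hacc.comp measurable_prodMk_left)).symm
    simp_rw [s1]
    rw [lintegral_lintegral_swap]
    · refine lintegral_congr fun y => ?_
      exact (lintegral_congr fun x => aux_balance h3 h4 x y).trans
        (lintegral_const_mul _ (hacc.comp (measurable_prodMk_left (x := y))))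
    · exact ((ht.comp measurable_fst).ennreal_ofReal.mul hacc).aemeasurable
  have e2 : (∫⁻ x, ENNReal.ofReal (tgt x) * (ENNReal.ofReal (imhR tgt prp x) *
      A.indicator (1 : (Fin d → ℝ) → ENNReal) x))
      = ∫⁻ x in A, ENNReal.ofReal (tgt x) * ENNReal.ofReal (imhR tgt prp x) := by
    rw [← lintegral_indicator hA]
    refine lintegral_congr fun x => ?_
    by_cases hx : x ∈ A <;> simp [hx]
  rw [e1, e2, ← lintegral_add_right _ (by fun_prop)]
  refine lintegral_congr fun x => ?_
  rw [← mul_add, aux_total h1 h2 h3 h4 hi, mul_one]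

lemma aux_bind_comb (P : (Fin d → ℝ) → Measure (Fin d → ℝ)) (hP : Measurable P)
    (a b : ENNReal) (x : Fin d → ℝ) (μ : Measure (Fin d → ℝ)) (hμ : μ.bind P = μ) :
    (a • Measure.dirac x + b • μ).bind P = a • P x + b • μ := by
  ext A hA
  have hPA : Measurable fun x => P x A := (Measure.measurable_coe hA).comp hP
  have h : ∫⁻ x, P x A ∂μ = μ A := by
    rw [← Measure.bind_apply hA hP.aemeasurable, hμ]
  rw [Measure.bind_apply hA hP.aemeasurable, lintegral_add_measure, lintegral_smul_measure,
    lintegral_smul_measure, lintegral_dirac' _ hPA, h]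
  simp

end helpers

/-- if `w* = sup w < ∞` is attained at `x*`, then for every `n ≥ 1`,
`Pⁿ(x*,·) = (1 − 1/w*)ⁿ·δ_{x*} + (1 − (1 − 1/w*)ⁿ)·π` as probability measures;
consequently `‖Pⁿ(x*,·) − π‖_TV = (1 − 1/w*)ⁿ`. -/
theorem imh_exact_mixture_at_max (d : ℕ) (tgt prp : (Fin d → ℝ) → ℝ)
    (htgt_cont : Continuous tgt) (hprp_cont : Continuous prp)
    (htgt_nonneg : ∀ x, 0 ≤ tgt x) (hprp_pos : ∀ x, 0 < prp x)
    (htgt_int : (∫ x, tgt x) = 1) (hprp_int : (∫ x, prp x) = 1)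
    (hbdd : BddAbove (Set.range (imhW tgt prp)))
    (wstar : ℝ) (hwstar : wstar = ⨆ x, imhW tgt prp x)
    (xstar : Fin d → ℝ) (hattain : imhW tgt prp xstar = wstar) :
    ∀ n : ℕ, 1 ≤ n →
      kiter (imhP tgt prp) n xstar =
        ENNReal.ofReal ((1 - 1 / wstar) ^ n) • Measure.dirac xstar
          + ENNReal.ofReal (1 - (1 - 1 / wstar) ^ n) • densityMeasure tgt
      ∧ tvDist (kiter (imhP tgt prp) n xstar) (densityMeasure tgt) = (1 - 1 / wstar) ^ n := by
  have hint : Integrable prp := by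
    by_contra h
    rw [integral_undef h] at hprp_int
    exact zero_ne_one hprp_int
  have hintt : Integrable tgt := by
    by_contra h
    rw [integral_undef h] at htgt_int
    exact zero_ne_one htgt_int
  have hle : ∀ y, imhW tgt prp y ≤ wstar := fun y => hwstar ▸ le_ciSup hbdd y
  have htw : ∀ y, tgt y = prp y * imhW tgt prp y := by
    intro y
    have := (hprp_pos y).ne'
    unfold imhW; field_simp
  have hw1 : 1 ≤ wstar := by
    have : ∫ x, tgt x ≤ ∫ x, wstar * prp x := by
      refine integral_mono hintt (hint.const_mul _) fun y => ?_
      show tgt y ≤ wstar * prp y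
      rw [htw y, mul_comm]
      exact mul_le_mul_of_nonneg_right (hle y) (hprp_pos y).le
    rwa [integral_const_mul, htgt_int, hprp_int, mul_one] at this
  have hw0 : 0 < wstar := by linarith
  have hmin : ∀ y, prp y * min (imhW tgt prp y / imhW tgt prp xstar) 1 = 1 / wstar * tgt y := by
    intro y
    rw [hattain, min_eq_left ((div_le_one hw0).2 (hle y)), htw y]
    ring
  have hR : imhR tgt prp xstar = 1 - 1 / wstar := by
    have : ∀ y, (1 - min (imhW tgt prp y / imhW tgt prp xstar) 1) * prp y
        = prp y - 1 / wstar * tgt y := by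
      intro y; rw [← hmin y]; ring
    unfold imhR
    simp_rw [this]
    rw [integral_sub hint (hintt.const_mul _), integral_const_mul, htgt_int, hprp_int, mul_one]
  have hi0 : 0 ≤ 1 / wstar := by positivity
  have hi1 : 1 / wstar ≤ 1 := (div_le_one hw0).2 hw1
  have hbase : imhP tgt prp xstar = ENNReal.ofReal (1 - 1 / wstar) • Measure.dirac xstar
      + ENNReal.ofReal (1 / wstar) • densityMeasure tgt := by
    unfold imhP densityMeasure
    rw [hR, add_comm]
    simp_rw [hmin, ENNReal.ofReal_mul hi0]
    congr 1
    exact withDensity_smul _ htgt_cont.measurable.ennreal_ofReal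
  set r : ℝ := 1 - 1 / wstar with hr
  have hr0 : 0 ≤ r := by linarith
  have hr1 : r ≤ 1 := by linarith
  have hrn : ∀ n : ℕ, r ^ n ≤ 1 := fun n => pow_le_one₀ hr0 hr1
  have hmain : ∀ n : ℕ, kiter (imhP tgt prp) n xstar =
        ENNReal.ofReal (r ^ n) • Measure.dirac xstar
          + ENNReal.ofReal (1 - r ^ n) • densityMeasure tgt := by
    intro n
    induction n with
    | zero => simp [kiter]
    | succ n ih =>
      rw [kiter, ih, aux_bind_comb _ (aux_meas_P htgt_cont hprp_cont) _ _ _ _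
        (aux_inv htgt_cont hprp_cont htgt_nonneg hprp_pos hprp_int), hbase, smul_add, smul_smul,
        smul_smul, add_assoc, ← add_smul, ← ENNReal.ofReal_mul (pow_nonneg hr0 n),
        ← ENNReal.ofReal_mul (pow_nonneg hr0 n), ← ENNReal.ofReal_add
          (mul_nonneg (pow_nonneg hr0 n) hi0) (by linarith [hrn n]), ← pow_succ]
      congr 3
      rw [pow_succ, hr]; ring
  have hprob : IsProbabilityMeasure (densityMeasure tgt) := by
    constructor
    unfold densityMeasure
    rw [withDensity_apply _ MeasurableSet.univ, Measure.restrict_univ,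
      ← ofReal_integral_eq_lintegral_ofReal hintt (ae_of_all _ htgt_nonneg), htgt_int]
    simp
  intro n hn
  refine ⟨hmain n, ?_⟩
  have hdiff : ∀ A : Set (Fin d → ℝ), |(kiter (imhP tgt prp) n xstar A).toReal
      - (densityMeasure tgt A).toReal|
      = r ^ n * |(Measure.dirac xstar A).toReal - (densityMeasure tgt A).toReal| := by
    intro A
    rw [hmain n, ← abs_of_nonneg (pow_nonneg hr0 n), ← abs_mul, abs_of_nonneg (pow_nonneg hr0 n)]
    congr 1
    rw [Measure.add_apply, Measure.smul_apply, Measure.smul_apply, smul_eq_mul, smul_eq_mul,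
      ENNReal.toReal_add (ENNReal.mul_ne_top ENNReal.ofReal_ne_top (measure_ne_top _ _))
        (ENNReal.mul_ne_top ENNReal.ofReal_ne_top (measure_ne_top _ _)), ENNReal.toReal_mul,
      ENNReal.toReal_mul, ENNReal.toReal_ofReal (pow_nonneg hr0 n),
      ENNReal.toReal_ofReal (by linarith [hrn n])]
    ring
  have hub : ∀ A : Set (Fin d → ℝ),
      |(Measure.dirac xstar A).toReal - (densityMeasure tgt A).toReal| ≤ 1 := by
    intro A
    have a1 : (Measure.dirac xstar A).toReal ≤ 1 := measureReal_le_one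
    have a2 : (densityMeasure tgt A).toReal ≤ 1 := measureReal_le_one
    have a3 : 0 ≤ (Measure.dirac xstar A).toReal := ENNReal.toReal_nonneg
    have a4 : 0 ≤ (densityMeasure tgt A).toReal := ENNReal.toReal_nonneg
    rw [abs_le]; constructor <;> linarith
  have hub' : ∀ A : {s : Set (Fin d → ℝ) // MeasurableSet s},
      |(kiter (imhP tgt prp) n xstar A.1).toReal - (densityMeasure tgt A.1).toReal| ≤ r ^ n := by
    intro A
    rw [hdiff]
    exact mul_le_of_le_one_right (pow_nonneg hr0 n) (hub A.1)
  have : Nonempty {s : Set (Fin d → ℝ) // MeasurableSet s} := ⟨⟨∅, MeasurableSet.empty⟩⟩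
  unfold tvDist
  refine le_antisymm (ciSup_le hub') ?_
  have hlow := le_ciSup (f := fun A : {s : Set (Fin d → ℝ) // MeasurableSet s} =>
      |(kiter (imhP tgt prp) n xstar A.1).toReal - (densityMeasure tgt A.1).toReal|)
    ⟨r ^ n, by rintro _ ⟨A, rfl⟩; exact hub' A⟩ ⟨{xstar}, measurableSet_singleton _⟩
  refine le_trans ?_ hlow
  show r ^ n ≤ |(kiter (imhP tgt prp) n xstar {xstar}).toReal
    - (densityMeasure tgt {xstar}).toReal|
  rw [hdiff]
  rcases Nat.eq_zero_or_pos d with hd | hd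
  · -- in dimension zero the space is a point and `r = 0`
    subst hd
    have hvol : ∀ f : (Fin 0 → ℝ) → ℝ, ∫ x, f x = f xstar := by
      intro f
      have : ∀ x, f x = f xstar := fun x => congrArg f (Subsingleton.elim _ _)
      simp_rw [this]
      simp [Measure.real, volume_pi, Measure.pi_of_empty]
    have : wstar = 1 := by
      rw [← hattain, imhW, ← hvol tgt, ← hvol prp, htgt_int, hprp_int, div_one]
    have hrz : r = 0 := by rw [hr, this]; norm_num
    rw [hrz, zero_pow (by omega)]; simp
  · have : Nonempty (Fin d) := ⟨⟨0, hd⟩⟩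
    have hz : densityMeasure tgt {xstar} = 0 :=
      withDensity_absolutelyContinuous _ _ (measure_singleton xstar)
    rw [hz]; simp
end

section
/- Consider the Random Walk Metropolis–Hastings chain on ℝ with target density π equal to the uniform density on [−1,1] (π(x) = 1/2 for x ∈ [−1,1], 0 otherwise) and proposal Uniform[x−δ, x+δ], for a fixed constant δ with 1 ≤ δ < 2. Then: (1) for every x₀ ∈ [1−δ, δ−1] and every n ≥ 1, ‖P^n(x₀,·) − π‖_TV ≤ (1 − 1/δ)^n; (2) for every y₀ ∈ [−1,1] with |y₀| > δ−1 and every n ≥ 1, ‖P^n(y₀,·) − π‖_TV ≥ ((δ − 1 + |y₀|)/(2δ))^n. In particular, when δ > 1 different initializations have different convergence rates. -/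
open MeasureTheory

/-- Rejection probability of the RWMH chain with target density `tgt` and proposal
`Uniform[x − δ, x + δ]` (with the Lean convention `0/0 = 0`, so `min (0/0) 1 = 0`). -/
noncomputable def rwmhR (tgt : ℝ → ℝ) (δ : ℝ) (x : ℝ) : ℝ :=
  1 - (1 / (2 * δ)) * ∫ y in (x - δ)..(x + δ), min (tgt y / tgt x) 1

/-- Transition kernel of the RWMH chain with target density `tgt` and proposal
`Uniform[x − δ, x + δ]`:
`P(x, A) = (1/(2δ))·∫_{x−δ}^{x+δ} min(tgt(y)/tgt(x), 1)·1_A(y) dy + R(x)·1_A(x)`. -/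
noncomputable def rwmhP (tgt : ℝ → ℝ) (δ : ℝ) (x : ℝ) : Measure ℝ :=
  (volume : Measure ℝ).withDensity
      (fun y => ENNReal.ofReal
        ((1 / (2 * δ)) * (Set.Icc (x - δ) (x + δ)).indicator (fun z => min (tgt z / tgt x) 1) y))
    + ENNReal.ofReal (rwmhR tgt δ x) • Measure.dirac x

/-- The uniform density on `[−1, 1]`. -/
noncomputable def unifTgt : ℝ → ℝ := (Set.Icc (-1 : ℝ) 1).indicator fun _ => (1 / 2 : ℝ)


/-- The absolutely continuous part of the kernel. -/
noncomputable def rwK (tgt : ℝ → ℝ) (δ : ℝ) (x y : ℝ) : ENNReal :=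
  ENNReal.ofReal
    ((1 / (2 * δ)) * (Set.Icc (x - δ) (x + δ)).indicator (fun z => min (tgt z / tgt x) 1) y)

lemma rwmhP_eq (tgt : ℝ → ℝ) (δ x : ℝ) :
    rwmhP tgt δ x = (volume : Measure ℝ).withDensity (rwK tgt δ x)
      + ENNReal.ofReal (rwmhR tgt δ x) • Measure.dirac x := rfl

lemma rwK_meas {tgt : ℝ → ℝ} (ht : Measurable tgt) (δ : ℝ) :
    Measurable (Function.uncurry (rwK tgt δ)) := by
  have hS : MeasurableSet {p : ℝ × ℝ | p.1 - δ ≤ p.2 ∧ p.2 ≤ p.1 + δ} := by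
    apply MeasurableSet.inter
    · exact measurableSet_le (measurable_fst.sub_const δ) measurable_snd
    · exact measurableSet_le measurable_snd (measurable_fst.add_const δ)
  have hf : Measurable (fun p : ℝ × ℝ => min (tgt p.2 / tgt p.1) 1) := by fun_prop
  have h := ((hf.indicator hS).const_mul (1 / (2 * δ))).ennreal_ofReal
  exact h

lemma rwK_meas' {tgt : ℝ → ℝ} (ht : Measurable tgt) (δ x : ℝ) : Measurable (rwK tgt δ x) :=
  (rwK_meas ht δ).comp measurable_prodMk_left

lemma rw_total {tgt : ℝ → ℝ} (ht : Measurable tgt) (h0 : ∀ x, 0 ≤ tgt x) {δ : ℝ} (hδ : 0 < δ)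
    (x : ℝ) : (∫⁻ y, rwK tgt δ x y) + ENNReal.ofReal (rwmhR tgt δ x) = 1 := by
  set f : ℝ → ℝ := fun z => min (tgt z / tgt x) 1 with hf
  have hfm : Measurable f := by fun_prop
  have hf0 : ∀ z, 0 ≤ f z := fun z => le_min (div_nonneg (h0 _) (h0 _)) zero_le_one
  have hf1 : ∀ z, f z ≤ 1 := fun z => min_le_right _ _
  have hfi : IntegrableOn f (Set.Icc (x - δ) (x + δ)) := by
    refine Measure.integrableOn_of_bounded (M := 1) (by simp) hfm.aestronglyMeasurable ?_
    refine Filter.Eventually.of_forall fun z => ?_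
    rw [Real.norm_eq_abs, abs_of_nonneg (hf0 z)]
    exact hf1 z
  have hI : ∫ y in (x - δ)..(x + δ), f y = ∫ y in Set.Icc (x - δ) (x + δ), f y := by
    rw [intervalIntegral.integral_of_le (by linarith), integral_Icc_eq_integral_Ioc]
  have hJ0 : 0 ≤ ∫ y in Set.Icc (x - δ) (x + δ), f y := integral_nonneg hf0
  have hJ1 : ∫ y in Set.Icc (x - δ) (x + δ), f y ≤ 2 * δ := by
    calc _ ≤ ∫ y in Set.Icc (x - δ) (x + δ), (1:ℝ) :=
          integral_mono hfi (by simp) hf1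
      _ = 2 * δ := by
          simp
          rw [max_eq_left] <;> linarith
  have hK : ∫⁻ y, rwK tgt δ x y
      = ENNReal.ofReal (1 / (2 * δ) * ∫ y in Set.Icc (x - δ) (x + δ), f y) := by
    rw [← integral_indicator measurableSet_Icc, ← integral_const_mul,
      ofReal_integral_eq_lintegral_ofReal]
    · rfl
    · exact (hfi.integrable_indicator measurableSet_Icc).const_mul _
    · exact Filter.Eventually.of_forall fun z =>
        mul_nonneg (by positivity) (Set.indicator_nonneg (fun z _ => hf0 z) z)
  have hle : 1 / (2 * δ) * ∫ y in Set.Icc (x - δ) (x + δ), f y ≤ 1 := by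
    rw [one_div, inv_mul_le_iff₀ (by positivity)]
    linarith
  have hR : rwmhR tgt δ x = 1 - 1 / (2 * δ) * ∫ y in Set.Icc (x - δ) (x + δ), f y := by
    rw [← hI]; rfl
  rw [hK, hR, ← ENNReal.ofReal_add (by positivity) (by linarith)]
  simp

lemma rw_K_le {tgt : ℝ → ℝ} (ht : Measurable tgt) (h0 : ∀ x, 0 ≤ tgt x) {δ : ℝ} (hδ : 0 < δ)
    (x : ℝ) : ∫⁻ y, rwK tgt δ x y ≤ 1 := by
  rw [← rw_total ht h0 hδ x]; exact le_self_add

lemma rw_R_eq {tgt : ℝ → ℝ} (ht : Measurable tgt) (h0 : ∀ x, 0 ≤ tgt x) {δ : ℝ} (hδ : 0 < δ)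
    (x : ℝ) : ENNReal.ofReal (rwmhR tgt δ x) = 1 - ∫⁻ y, rwK tgt δ x y := by
  refine ENNReal.eq_sub_of_add_eq ?_ ?_
  · exact ne_top_of_le_ne_top ENNReal.one_ne_top (rw_K_le ht h0 hδ x)
  · rw [add_comm]; exact rw_total ht h0 hδ x

lemma rw_R_meas {tgt : ℝ → ℝ} (ht : Measurable tgt) (h0 : ∀ x, 0 ≤ tgt x) {δ : ℝ} (hδ : 0 < δ) :
    Measurable fun x => ENNReal.ofReal (rwmhR tgt δ x) := by
  simp_rw [rw_R_eq ht h0 hδ]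
  exact measurable_const.sub (rwK_meas ht δ).lintegral_prod_right

lemma rw_P_apply (tgt : ℝ → ℝ) (δ x : ℝ) {A : Set ℝ} (hA : MeasurableSet A) :
    rwmhP tgt δ x A = (∫⁻ y in A, rwK tgt δ x y)
      + ENNReal.ofReal (rwmhR tgt δ x) * A.indicator 1 x := by
  rw [rwmhP_eq, Measure.add_apply, withDensity_apply _ hA, Measure.smul_apply,
    Measure.dirac_apply' _ hA, smul_eq_mul]

lemma rw_P_meas {tgt : ℝ → ℝ} (ht : Measurable tgt) (h0 : ∀ x, 0 ≤ tgt x) {δ : ℝ} (hδ : 0 < δ) :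
    Measurable (rwmhP tgt δ) := by
  refine Measure.measurable_of_measurable_coe _ fun A hA => ?_
  simp_rw [rw_P_apply tgt δ _ hA]
  refine Measurable.add ?_ ((rw_R_meas ht h0 hδ).mul (measurable_one.indicator hA))
  exact (rwK_meas ht δ).lintegral_prod_right

lemma rw_P_prob {tgt : ℝ → ℝ} (ht : Measurable tgt) (h0 : ∀ x, 0 ≤ tgt x) {δ : ℝ} (hδ : 0 < δ)
    (x : ℝ) : IsProbabilityMeasure (rwmhP tgt δ x) := by
  constructor
  rw [rw_P_apply _ _ _ MeasurableSet.univ]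
  simpa using rw_total ht h0 hδ x

lemma kiter_prob {P : ℝ → Measure ℝ} (hP : Measurable P) (hp : ∀ x, IsProbabilityMeasure (P x))
    (x : ℝ) (n : ℕ) : IsProbabilityMeasure (kiter P n x) := by
  induction n with
  | zero => exact (inferInstance : IsProbabilityMeasure (Measure.dirac x))
  | succ n ih =>
    constructor
    show (kiter P n x).bind P Set.univ = 1
    rw [Measure.bind_apply MeasurableSet.univ hP.aemeasurable]
    simp

lemma rw_balance {tgt : ℝ → ℝ} (h0 : ∀ x, 0 ≤ tgt x) {δ : ℝ} (x y : ℝ) :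
    ENNReal.ofReal (tgt x) * rwK tgt δ x y = ENNReal.ofReal (tgt y) * rwK tgt δ y x := by
  unfold rwK
  rw [← ENNReal.ofReal_mul (h0 _), ← ENNReal.ofReal_mul (h0 _)]
  congr 1
  have key : tgt x * min (tgt y / tgt x) 1 = tgt y * min (tgt x / tgt y) 1 := by
    rw [mul_min_of_nonneg _ _ (h0 x), mul_min_of_nonneg _ _ (h0 y)]
    rcases (h0 x).eq_or_lt with hx | hx <;> rcases (h0 y).eq_or_lt with hy | hy
    · simp [← hx, ← hy]
    · simp [← hx, hy.le]
    · simp [← hy, hx.le]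
    · rw [mul_div_cancel₀ _ hx.ne', mul_div_cancel₀ _ hy.ne', mul_one, mul_one, min_comm]
  by_cases h : y ∈ Set.Icc (x - δ) (x + δ)
  · have h' : x ∈ Set.Icc (y - δ) (y + δ) := ⟨by linarith [h.2], by linarith [h.1]⟩
    rw [Set.indicator_of_mem h, Set.indicator_of_mem h']
    linear_combination (1 / (2 * δ)) * key
  · have h' : x ∉ Set.Icc (y - δ) (y + δ) := fun h' => h ⟨by linarith [h'.2], by linarith [h'.1]⟩
    rw [Set.indicator_of_notMem h, Set.indicator_of_notMem h']
    simp

lemma rw_stat {tgt : ℝ → ℝ} (ht : Measurable tgt) (h0 : ∀ x, 0 ≤ tgt x) {δ : ℝ} (hδ : 0 < δ) :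
    (densityMeasure tgt).bind (rwmhP tgt δ) = densityMeasure tgt := by
  ext A hA
  have hPm := rw_P_meas ht h0 hδ
  have hto : Measurable fun y => ENNReal.ofReal (tgt y) := ht.ennreal_ofReal
  have hRm := rw_R_meas ht h0 hδ
  have hKm := rwK_meas ht δ
  rw [Measure.bind_apply hA hPm.aemeasurable]
  unfold densityMeasure
  have hPA : Measurable fun x => rwmhP tgt δ x A := (Measure.measurable_coe hA).comp hPm
  rw [lintegral_withDensity_eq_lintegral_mul _ hto hPA,
    withDensity_apply _ hA]
  simp only [Pi.mul_apply, rw_P_apply tgt δ _ hA, mul_add]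
  have hm1 : Measurable fun x =>
      ENNReal.ofReal (tgt x) * (ENNReal.ofReal (rwmhR tgt δ x) * A.indicator 1 x) :=
    hto.mul (hRm.mul (measurable_one.indicator hA))
  have hm2 : Measurable fun x => ENNReal.ofReal (tgt x) * ENNReal.ofReal (rwmhR tgt δ x) :=
    hto.mul hRm
  rw [lintegral_add_right _ hm1]
  have e1 : ∫⁻ x, ENNReal.ofReal (tgt x) * ∫⁻ y in A, rwK tgt δ x y
      = ∫⁻ y in A, ENNReal.ofReal (tgt y) * ∫⁻ x, rwK tgt δ y x := by
    calc _ = ∫⁻ x, ∫⁻ y in A, ENNReal.ofReal (tgt x) * rwK tgt δ x y := by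
          refine lintegral_congr fun x => ?_
          rw [lintegral_const_mul _ (rwK_meas' ht δ x)]
      _ = ∫⁻ y in A, ∫⁻ x, ENNReal.ofReal (tgt x) * rwK tgt δ x y := by
          apply lintegral_lintegral_swap
          exact ((hto.comp measurable_fst).mul hKm).aemeasurable
      _ = _ := by
          refine lintegral_congr fun y => ?_
          rw [← lintegral_const_mul _ (rwK_meas' ht δ y)]
          exact lintegral_congr fun x => rw_balance h0 x y
  have e2 : ∫⁻ x, ENNReal.ofReal (tgt x) * (ENNReal.ofReal (rwmhR tgt δ x) * A.indicator 1 x)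
      = ∫⁻ x in A, ENNReal.ofReal (tgt x) * ENNReal.ofReal (rwmhR tgt δ x) := by
    rw [← lintegral_indicator hA]
    refine lintegral_congr fun x => ?_
    by_cases h : x ∈ A <;> simp [h]
  rw [e1, e2, ← lintegral_add_right _ hm2]
  refine lintegral_congr fun x => ?_
  rw [← mul_add, rw_total ht h0 hδ x, mul_one]

lemma unif_meas : Measurable unifTgt := measurable_const.indicator measurableSet_Icc

lemma unif_nonneg (x : ℝ) : 0 ≤ unifTgt x :=
  Set.indicator_nonneg (fun _ _ => by norm_num) x

lemma unif_ofReal (y : ℝ) : ENNReal.ofReal (unifTgt y)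
    = (Set.Icc (-1 : ℝ) 1).indicator (fun _ => ENNReal.ofReal (1 / 2)) y := by
  unfold unifTgt
  by_cases h : y ∈ Set.Icc (-1 : ℝ) 1
  · rw [Set.indicator_of_mem h, Set.indicator_of_mem h]
  · rw [Set.indicator_of_notMem h, Set.indicator_of_notMem h, ENNReal.ofReal_zero]

instance unif_prob : IsProbabilityMeasure (densityMeasure unifTgt) := by
  constructor
  unfold densityMeasure
  rw [withDensity_apply _ MeasurableSet.univ, setLIntegral_univ]
  simp_rw [unif_ofReal]
  rw [lintegral_indicator measurableSet_Icc, setLIntegral_const, Real.volume_Icc,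
    ← ENNReal.ofReal_mul (by norm_num)]
  norm_num

lemma rwK_unif (δ : ℝ) {x : ℝ} (hx : x ∈ Set.Icc (-1 : ℝ) 1) (y : ℝ) :
    rwK unifTgt δ x y = (Set.Icc (x - δ) (x + δ) ∩ Set.Icc (-1) 1).indicator
      (fun _ => ENNReal.ofReal (1 / (2 * δ))) y := by
  have hux : unifTgt x = 1 / 2 := Set.indicator_of_mem hx _
  unfold rwK
  by_cases h1 : y ∈ Set.Icc (x - δ) (x + δ)
  · by_cases h2 : y ∈ Set.Icc (-1 : ℝ) 1
    · have huy : unifTgt y = 1 / 2 := Set.indicator_of_mem h2 _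
      rw [Set.indicator_of_mem h1, Set.indicator_of_mem (Set.mem_inter h1 h2), hux, huy]
      norm_num
    · have huy : unifTgt y = 0 := Set.indicator_of_notMem h2 _
      rw [Set.indicator_of_mem h1, Set.indicator_of_notMem (fun h => h2 h.2), huy]
      simp
  · rw [Set.indicator_of_notMem h1, Set.indicator_of_notMem (fun h => h1 h.1)]
    simp

lemma P_center {δ : ℝ} (hδ₁ : 1 ≤ δ) (hδ₂ : δ < 2) {x : ℝ} (hx : x ∈ Set.Icc (1 - δ) (δ - 1)) :
    rwmhP unifTgt δ x = ENNReal.ofReal (1 / δ) • densityMeasure unifTgt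
      + ENNReal.ofReal (1 - 1 / δ) • Measure.dirac x := by
  have hδ : 0 < δ := by linarith
  have hxI : x ∈ Set.Icc (-1 : ℝ) 1 := ⟨by linarith [hx.1], by linarith [hx.2]⟩
  have hsub : Set.Icc (x - δ) (x + δ) ∩ Set.Icc (-1) 1 = Set.Icc (-1 : ℝ) 1 := by
    apply Set.inter_eq_right.2
    exact Set.Icc_subset_Icc (by linarith [hx.2]) (by linarith [hx.1])
  have hK : rwK unifTgt δ x
      = ENNReal.ofReal (1 / δ) • fun y => ENNReal.ofReal (unifTgt y) := by
    funext y
    rw [rwK_unif δ hxI, hsub, Pi.smul_apply, unif_ofReal, smul_eq_mul]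
    by_cases h : y ∈ Set.Icc (-1 : ℝ) 1
    · rw [Set.indicator_of_mem h, Set.indicator_of_mem h, ← ENNReal.ofReal_mul (by positivity)]
      congr 1
      field_simp
    · rw [Set.indicator_of_notMem h, Set.indicator_of_notMem h, mul_zero]
  have hW : (volume : Measure ℝ).withDensity (rwK unifTgt δ x)
      = ENNReal.ofReal (1 / δ) • densityMeasure unifTgt := by
    rw [hK, withDensity_smul _ unif_meas.ennreal_ofReal]
    rfl
  have hT : ∫⁻ y, rwK unifTgt δ x y = ENNReal.ofReal (1 / δ) := by
    have : (volume : Measure ℝ).withDensity (rwK unifTgt δ x) Set.univ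
      = ENNReal.ofReal (1 / δ) := by
      rw [hW]; simp
    rwa [withDensity_apply _ MeasurableSet.univ, setLIntegral_univ] at this
  rw [rwmhP_eq, hW, rw_R_eq unif_meas unif_nonneg hδ, hT, ENNReal.ofReal_sub _ (by positivity),
    ENNReal.ofReal_one]

lemma bind_lin {P : ℝ → Measure ℝ} (hP : Measurable P) (a b : ENNReal) (μ ν : Measure ℝ) :
    (a • μ + b • ν).bind P = a • μ.bind P + b • ν.bind P := by
  ext A hA
  rw [Measure.bind_apply hA hP.aemeasurable, lintegral_add_measure, lintegral_smul_measure,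
    lintegral_smul_measure, Measure.add_apply, Measure.smul_apply, Measure.smul_apply,
    Measure.bind_apply hA hP.aemeasurable, Measure.bind_apply hA hP.aemeasurable]

lemma kiter_center {δ : ℝ} (hδ₁ : 1 ≤ δ) (hδ₂ : δ < 2) {x : ℝ}
    (hx : x ∈ Set.Icc (1 - δ) (δ - 1)) (n : ℕ) :
    kiter (rwmhP unifTgt δ) n x = ENNReal.ofReal (1 - (1 - 1 / δ) ^ n) • densityMeasure unifTgt
      + ENNReal.ofReal ((1 - 1 / δ) ^ n) • Measure.dirac x := by
  have hδ : 0 < δ := by linarith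
  have hP := rw_P_meas unif_meas unif_nonneg hδ
  have hd : 1 / δ ≤ 1 := by rw [div_le_one hδ]; exact hδ₁
  have hd0 : 0 < 1 / δ := by positivity
  induction n with
  | zero => simp [kiter]
  | succ n ih =>
    show (kiter (rwmhP unifTgt δ) n x).bind (rwmhP unifTgt δ) = _
    have hr0 : 0 ≤ (1 - 1 / δ) ^ n := pow_nonneg (by linarith) n
    have hr1 : (1 - 1 / δ) ^ n ≤ 1 := pow_le_one₀ (by linarith) (by linarith)
    rw [ih, bind_lin hP, rw_stat unif_meas unif_nonneg hδ, Measure.dirac_bind hP,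
      P_center hδ₁ hδ₂ hx, smul_add, smul_smul, smul_smul, ← add_assoc, ← add_smul,
      ← ENNReal.ofReal_mul hr0, ← ENNReal.ofReal_mul hr0,
      ← ENNReal.ofReal_add (by linarith) (by positivity), pow_succ]
    congr 3
    ring

lemma R_edge {δ : ℝ} (hδ₁ : 1 ≤ δ) {y : ℝ} (hy : y ∈ Set.Icc (-1 : ℝ) 1) (hy' : δ - 1 < |y|) :
    ENNReal.ofReal ((δ - 1 + |y|) / (2 * δ)) ≤ ENNReal.ofReal (rwmhR unifTgt δ y) := by
  have hδ : 0 < δ := by linarith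
  have hy1 : |y| ≤ 1 := abs_le.2 hy
  have hv : volume (Set.Icc (y - δ) (y + δ) ∩ Set.Icc (-1) 1) ≤ ENNReal.ofReal (1 - |y| + δ) := by
    rcases le_total 0 y with h | h
    · calc _ ≤ volume (Set.Icc (y - δ) 1) :=
            measure_mono fun z hz => ⟨hz.1.1, hz.2.2⟩
        _ = _ := by rw [Real.volume_Icc, abs_of_nonneg h]; congr 1; ring
    · calc _ ≤ volume (Set.Icc (-1) (y + δ)) :=
            measure_mono fun z hz => ⟨hz.2.1, hz.1.2⟩
        _ = _ := by rw [Real.volume_Icc, abs_of_nonpos h]; congr 1; ring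
  have hK : ∫⁻ z, rwK unifTgt δ y z ≤ ENNReal.ofReal (1 - (δ - 1 + |y|) / (2 * δ)) := by
    simp_rw [rwK_unif δ hy]
    rw [lintegral_indicator (measurableSet_Icc.inter measurableSet_Icc), setLIntegral_const]
    calc _ ≤ ENNReal.ofReal (1 / (2 * δ)) * ENNReal.ofReal (1 - |y| + δ) := by gcongr
      _ = _ := by
        rw [← ENNReal.ofReal_mul (by positivity)]
        congr 1
        field_simp
        ring
  rw [rw_R_eq unif_meas unif_nonneg hδ]
  have hr1 : (δ - 1 + |y|) / (2 * δ) ≤ 1 := by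
    rw [div_le_one (by positivity)]; linarith
  calc _ = 1 - ENNReal.ofReal (1 - (δ - 1 + |y|) / (2 * δ)) := by
        rw [← ENNReal.ofReal_one, ← ENNReal.ofReal_sub _ (by linarith)]
        congr 1
        ring
    _ ≤ _ := tsub_le_tsub_left hK 1

lemma kiter_edge {δ : ℝ} (hδ₁ : 1 ≤ δ) {y : ℝ} (hy : y ∈ Set.Icc (-1 : ℝ) 1) (hy' : δ - 1 < |y|)
    (n : ℕ) : ENNReal.ofReal ((δ - 1 + |y|) / (2 * δ)) ^ n
      ≤ kiter (rwmhP unifTgt δ) n y {y} := by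
  have hδ : 0 < δ := by linarith
  have hP := rw_P_meas unif_meas unif_nonneg hδ
  induction n with
  | zero => simp [kiter]
  | succ n ih =>
    show _ ≤ (kiter (rwmhP unifTgt δ) n y).bind (rwmhP unifTgt δ) {y}
    rw [Measure.bind_apply (measurableSet_singleton y) hP.aemeasurable]
    have h1 : ENNReal.ofReal ((δ - 1 + |y|) / (2 * δ)) ≤ rwmhP unifTgt δ y {y} := by
      rw [rw_P_apply _ _ _ (measurableSet_singleton y)]
      simpa using R_edge hδ₁ hy hy'
    calc _ = ENNReal.ofReal ((δ - 1 + |y|) / (2 * δ))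
            * ENNReal.ofReal ((δ - 1 + |y|) / (2 * δ)) ^ n := pow_succ' _ _
      _ ≤ rwmhP unifTgt δ y {y} * kiter (rwmhP unifTgt δ) n y {y} := by gcongr
      _ = ∫⁻ x in {y}, rwmhP unifTgt δ x {y} ∂(kiter (rwmhP unifTgt δ) n y) := by
          rw [lintegral_singleton]
      _ ≤ _ := setLIntegral_le_lintegral _ _

/-- for the RWMH chain with target `Uniform[−1,1]` and proposal
`Uniform[x−δ, x+δ]`, `1 ≤ δ < 2`:
(1) every `x₀ ∈ [1−δ, δ−1]` satisfies `‖Pⁿ(x₀,·) − π‖_TV ≤ (1 − 1/δ)ⁿ`;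
(2) every `y₀ ∈ [−1,1]` with `|y₀| > δ−1` satisfies
`‖Pⁿ(y₀,·) − π‖_TV ≥ ((δ − 1 + |y₀|)/(2δ))ⁿ`. -/
theorem rwmh_uniform_different_rates (δ : ℝ) (hδ₁ : 1 ≤ δ) (hδ₂ : δ < 2) :
    (∀ x₀ : ℝ, x₀ ∈ Set.Icc (1 - δ) (δ - 1) → ∀ n : ℕ, 1 ≤ n →
      tvDist (kiter (rwmhP unifTgt δ) n x₀) (densityMeasure unifTgt) ≤ (1 - 1 / δ) ^ n)
    ∧ (∀ y₀ : ℝ, y₀ ∈ Set.Icc (-1 : ℝ) 1 → δ - 1 < |y₀| → ∀ n : ℕ, 1 ≤ n →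
      ((δ - 1 + |y₀|) / (2 * δ)) ^ n ≤
        tvDist (kiter (rwmhP unifTgt δ) n y₀) (densityMeasure unifTgt)) := by
  have hδ : 0 < δ := by linarith
  have hP := rw_P_meas unif_meas unif_nonneg hδ
  constructor
  · intro x₀ hx n _
    have hd : 1 / δ ≤ 1 := by rw [div_le_one hδ]; exact hδ₁
    have hd0 : 0 < 1 / δ := by positivity
    have hr0 : 0 ≤ (1 - 1 / δ) ^ n := pow_nonneg (by linarith) n
    have hr1 : (1 - 1 / δ) ^ n ≤ 1 := pow_le_one₀ (by linarith) (by linarith)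
    haveI : Nonempty {s : Set ℝ // MeasurableSet s} := ⟨⟨Set.univ, MeasurableSet.univ⟩⟩
    refine ciSup_le fun A => ?_
    rw [kiter_center hδ₁ hδ₂ hx n, Measure.add_apply, Measure.smul_apply, Measure.smul_apply,
      smul_eq_mul, smul_eq_mul, ENNReal.toReal_add
        (ENNReal.mul_ne_top ENNReal.ofReal_ne_top (measure_ne_top _ _))
        (ENNReal.mul_ne_top ENNReal.ofReal_ne_top (measure_ne_top _ _)),
      ENNReal.toReal_mul, ENNReal.toReal_mul, ENNReal.toReal_ofReal (by linarith),
      ENNReal.toReal_ofReal hr0]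
    have a0 : 0 ≤ (densityMeasure unifTgt A.1).toReal := ENNReal.toReal_nonneg
    have a1 : (densityMeasure unifTgt A.1).toReal ≤ 1 := measureReal_le_one
    have b0 : 0 ≤ (Measure.dirac x₀ A.1).toReal := ENNReal.toReal_nonneg
    have b1 : (Measure.dirac x₀ A.1).toReal ≤ 1 := measureReal_le_one
    generalize (densityMeasure unifTgt A.1).toReal = a at *
    generalize (Measure.dirac x₀ A.1).toReal = b at *
    have : (1 - (1 - 1 / δ) ^ n) * a + (1 - 1 / δ) ^ n * b - a = (1 - 1 / δ) ^ n * (b - a) := by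
      ring
    rw [this, abs_mul, abs_of_nonneg hr0]
    exact mul_le_of_le_one_right hr0 (abs_le.2 ⟨by linarith, by linarith⟩)
  · intro y hy hy' n _
    haveI := kiter_prob hP (rw_P_prob unif_meas unif_nonneg hδ) y n
    have hb : BddAbove (Set.range fun A : {s : Set ℝ // MeasurableSet s} =>
        |(kiter (rwmhP unifTgt δ) n y A.1).toReal - (densityMeasure unifTgt A.1).toReal|) := by
      refine ⟨1, ?_⟩
      rintro _ ⟨A, rfl⟩
      have a0 : 0 ≤ (densityMeasure unifTgt A.1).toReal := ENNReal.toReal_nonneg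
      have a1 : (densityMeasure unifTgt A.1).toReal ≤ 1 := measureReal_le_one
      have b0 : 0 ≤ (kiter (rwmhP unifTgt δ) n y A.1).toReal := ENNReal.toReal_nonneg
      have b1 : (kiter (rwmhP unifTgt δ) n y A.1).toReal ≤ 1 := measureReal_le_one
      exact abs_le.2 ⟨by linarith, by linarith⟩
    refine le_trans ?_ (le_ciSup hb ⟨{y}, measurableSet_singleton y⟩)
    have hz : densityMeasure unifTgt {y} = 0 :=
      withDensity_absolutelyContinuous _ _ Real.volume_singleton
    have hr : 0 ≤ (δ - 1 + |y|) / (2 * δ) :=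
      div_nonneg (by linarith [abs_nonneg y]) (by positivity)
    have h := ENNReal.toReal_mono (measure_ne_top _ _) (kiter_edge hδ₁ hy hy' n)
    rw [ENNReal.toReal_pow, ENNReal.toReal_ofReal hr] at h
    simp only [hz, ENNReal.toReal_zero, sub_zero]
    exact h.trans (le_abs_self _)
end

section
/- For the IMH chain on the finite state space X = {1, …, m}, for every t ≥ 1, (1 − π₁)·(1 − 1/w*)^t ≤ d(t) ≤ (1 − 1/w*)^t, where w* = w₁. -/
/-- The IMH transition matrix on a finite state space, for target pmf `tgt` and proposal
pmf `prp`: `P(i,j) = p_j·min(1, w_j/w_i)` for `j ≠ i` and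
`P(i,i) = p_i + Σ_k p_k·max(0, 1 − w_k/w_i)`, where `w_i = π_i/p_i`. -/
noncomputable def imhMatrix {n : ℕ} (tgt prp : Fin n → ℝ) : Matrix (Fin n) (Fin n) ℝ :=
  Matrix.of fun i j =>
    if j = i then prp i + ∑ k, prp k * max 0 (1 - (tgt k / prp k) / (tgt i / prp i))
    else prp j * min 1 ((tgt j / prp j) / (tgt i / prp i))

/-- Total variation distance between two pmfs on a finite state space. -/
noncomputable def tvFin {n : ℕ} (μ ν : Fin n → ℝ) : ℝ := (1 / 2) * ∑ j, |μ j - ν j|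

theorem imh_row_eq {n : ℕ} (tgt prp : Fin n → ℝ) (ht : ∀ i, 0 < tgt i) (hp : ∀ i, 0 < prp i)
    (i j : Fin n) : imhMatrix tgt prp i j = prp j * min 1 ((tgt j / prp j) / (tgt i / prp i)) +
      (if j = i then ∑ k, prp k * max 0 (1 - (tgt k / prp k) / (tgt i / prp i)) else 0) := by
  unfold imhMatrix
  simp only [Matrix.of_apply]
  split_ifs with h
  · subst h
    have : tgt j / prp j ≠ 0 := (div_pos (ht j) (hp j)).ne'
    rw [div_self this]; simp
  · simp

theorem imh_row_sum {n : ℕ} (tgt prp : Fin n → ℝ) (ht : ∀ i, 0 < tgt i) (hp : ∀ i, 0 < prp i)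
    (hs : ∑ i, prp i = 1) (i : Fin n) : ∑ j, imhMatrix tgt prp i j = 1 := by
  simp only [imh_row_eq tgt prp ht hp, Finset.sum_add_distrib, Finset.sum_ite_eq',
    Finset.mem_univ, if_true]
  rw [← Finset.sum_add_distrib]
  refine Eq.trans ?_ hs
  refine Finset.sum_congr rfl fun k _ => ?_
  rw [← mul_add]
  rcases le_total 1 ((tgt k / prp k) / (tgt i / prp i)) with h | h
  · rw [min_eq_left h, max_eq_left (by linarith)]; ring
  · rw [min_eq_right h, max_eq_right (by linarith)]; ring

theorem imh_balance {n : ℕ} (tgt prp : Fin n → ℝ) (ht : ∀ i, 0 < tgt i) (hp : ∀ i, 0 < prp i)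
    (i j : Fin n) : tgt i * imhMatrix tgt prp i j = tgt j * imhMatrix tgt prp j i := by
  by_cases h : j = i
  · subst h; rfl
  rw [imh_row_eq tgt prp ht hp, imh_row_eq tgt prp ht hp, if_neg h, if_neg (Ne.symm h)]
  have key : ∀ a b, tgt a * (prp b * min 1 ((tgt b / prp b) / (tgt a / prp a))) =
      prp a * prp b * min (tgt a / prp a) (tgt b / prp b) := by
    intro a b
    have hw := div_pos (ht a) (hp a)
    have h1 : tgt a = prp a * (tgt a / prp a) := by have := (hp a).ne'; field_simp
    have h2 : (tgt a / prp a) * min 1 ((tgt b / prp b) / (tgt a / prp a)) =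
        min (tgt a / prp a) (tgt b / prp b) := by
      rw [mul_min_of_nonneg _ _ hw.le, mul_one, mul_div_cancel₀ _ hw.ne']
    rw [← h2]
    nth_rewrite 1 [h1]
    ring
  rw [add_zero, add_zero, key, key, min_comm]; ring

theorem imh_stat {n : ℕ} (tgt prp : Fin n → ℝ) (ht : ∀ i, 0 < tgt i) (hp : ∀ i, 0 < prp i)
    (hs : ∑ i, prp i = 1) (j : Fin n) : ∑ i, tgt i * imhMatrix tgt prp i j = tgt j := by
  simp only [fun i => imh_balance tgt prp ht hp i j, ← Finset.mul_sum,
    imh_row_sum tgt prp ht hp hs, mul_one]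

theorem imh_minor {n : ℕ} (tgt prp : Fin n → ℝ) (ht : ∀ i, 0 < tgt i) (hp : ∀ i, 0 < prp i)
    (w : ℝ) (hw : ∀ i, tgt i / prp i ≤ w) (hw1 : 1 ≤ w)
    (i j : Fin n) : 1 / w * tgt j ≤ imhMatrix tgt prp i j := by
  rw [imh_row_eq tgt prp ht hp]
  have h0 : 0 ≤ (if j = i then ∑ k, prp k * max 0 (1 - (tgt k / prp k) / (tgt i / prp i)) else 0) := by
    split_ifs
    · exact Finset.sum_nonneg fun k _ => mul_nonneg (hp k).le (le_max_left _ _)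
    · exact le_rfl
  have hwp : 0 < w := by linarith
  have hj := div_pos (ht j) (hp j)
  have hi := div_pos (ht i) (hp i)
  have h1 : (tgt j / prp j) / w ≤ min 1 ((tgt j / prp j) / (tgt i / prp i)) := by
    refine le_min ((div_le_one hwp).2 (hw j)) ?_
    exact div_le_div_of_nonneg_left hj.le hi (hw i)
  have h2 := mul_le_mul_of_nonneg_left h1 (hp j).le
  have h3 : 1 / w * tgt j = prp j * ((tgt j / prp j) / w) := by
    have := (hp j).ne'; field_simp
  linarith

theorem imh_row_zero {m : ℕ} (tgt prp : Fin (m + 2) → ℝ)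
    (ht : ∀ i, 0 < tgt i) (hp : ∀ i, 0 < prp i)
    (hts : ∑ i, tgt i = 1) (hs : ∑ i, prp i = 1)
    (hmono : ∀ i, tgt i / prp i ≤ tgt 0 / prp 0) (j : Fin (m + 2)) :
    imhMatrix tgt prp 0 j = (1 - 1 / (tgt 0 / prp 0)) * (if j = 0 then 1 else 0)
      + 1 / (tgt 0 / prp 0) * tgt j := by
  have hw := div_pos (ht 0) (hp 0)
  have hne : ∀ j, j ≠ 0 → imhMatrix tgt prp 0 j = 1 / (tgt 0 / prp 0) * tgt j := by
    intro j hj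
    rw [imh_row_eq tgt prp ht hp, if_neg hj, min_eq_right ((div_le_one hw).2 (hmono j))]
    have := (hp j).ne'
    have := (hp 0).ne'
    have := (ht 0).ne'
    field_simp
    ring
  by_cases hj : j = 0
  · subst hj
    have h1 := imh_row_sum tgt prp ht hp hs 0
    rw [Fin.sum_univ_succ] at h1 hts
    rw [Finset.sum_congr rfl (fun i _ => hne (Fin.succ i) (Fin.succ_ne_zero i)),
      ← Finset.mul_sum] at h1
    rw [if_pos rfl]
    have h2 : ∑ i : Fin (m + 1), tgt i.succ = 1 - tgt 0 := by linarith
    rw [h2] at h1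
    linarith
  · rw [hne j hj, if_neg hj]; ring

theorem tv_delta {n : ℕ} (tgt : Fin n → ℝ) (ht : ∀ i, 0 < tgt i) (hts : ∑ i, tgt i = 1)
    (i : Fin n) : ∑ j, |(if j = i then 1 else 0) - tgt j| = 2 * (1 - tgt i) := by
  have hle : tgt i ≤ 1 := by
    rw [← hts]; exact Finset.single_le_sum (fun k _ => (ht k).le) (Finset.mem_univ i)
  have : ∀ j, |(if j = i then 1 else 0) - tgt j| =
      tgt j + (if j = i then 1 - 2 * tgt i else 0) := by
    intro j
    split_ifs with h
    · subst h; rw [abs_of_nonneg (by linarith)]; ring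
    · rw [zero_sub, abs_neg, abs_of_pos (ht j)]; ring
  simp only [this, Finset.sum_add_distrib, hts, Finset.sum_ite_eq', Finset.mem_univ, if_true]
  ring

theorem pow_row_sum {n : ℕ} (P : Matrix (Fin n) (Fin n) ℝ) (h : ∀ i, ∑ j, P i j = 1)
    (t : ℕ) (i : Fin n) : ∑ j, (P ^ t) i j = 1 := by
  induction t with
  | zero => simp [Matrix.one_apply]
  | succ t ih =>
    simp only [pow_succ, Matrix.mul_apply]
    rw [Finset.sum_comm]
    simp only [← Finset.mul_sum, h, mul_one, ih]

theorem contraction {n : ℕ} (P : Matrix (Fin n) (Fin n) ℝ) (tgt : Fin n → ℝ) (e : ℝ)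
    (ht : ∀ i, 0 < tgt i) (hts : ∑ i, tgt i = 1) (he : 0 ≤ 1 - e)
    (hrow : ∀ i, ∑ j, P i j = 1) (hst : ∀ j, ∑ i, tgt i * P i j = tgt j)
    (hmin : ∀ i j, e * tgt j ≤ P i j) (t : ℕ) (i : Fin n) :
    ∑ j, |(P ^ t) i j - tgt j| ≤ 2 * (1 - e) ^ t := by
  induction t with
  | zero =>
    have := tv_delta tgt ht hts i
    have h2 := ht i
    simp only [pow_zero, Matrix.one_apply, eq_comm (a := i)]
    linarith
  | succ t ih =>
    have hz : ∑ k, ((P ^ t) i k - tgt k) = 0 := by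
      rw [Finset.sum_sub_distrib, pow_row_sum P hrow, hts, sub_self]
    have hD : ∀ j, (P ^ (t + 1)) i j - tgt j =
        ∑ k, ((P ^ t) i k - tgt k) * (P k j - e * tgt j) := by
      intro j
      simp only [mul_sub (_ - _), Finset.sum_sub_distrib, ← Finset.sum_mul, hz]
      simp only [sub_mul, Finset.sum_sub_distrib, hst, pow_succ, Matrix.mul_apply]
      ring
    calc ∑ j, |(P ^ (t + 1)) i j - tgt j|
        ≤ ∑ j, ∑ k, |(P ^ t) i k - tgt k| * (P k j - e * tgt j) := by
          refine Finset.sum_le_sum fun j _ => ?_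
          rw [hD]
          refine (Finset.abs_sum_le_sum_abs _ _).trans (le_of_eq ?_)
          refine Finset.sum_congr rfl fun k _ => ?_
          rw [abs_mul, abs_of_nonneg (sub_nonneg.2 (hmin k j))]
      _ = (∑ k, |(P ^ t) i k - tgt k|) * (1 - e) := by
          rw [Finset.sum_comm, Finset.sum_mul]
          refine Finset.sum_congr rfl fun k _ => ?_
          rw [← Finset.mul_sum, Finset.sum_sub_distrib, hrow, ← Finset.mul_sum, hts, mul_one]
      _ ≤ 2 * (1 - e) ^ t * (1 - e) := mul_le_mul_of_nonneg_right ih he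
      _ = 2 * (1 - e) ^ (t + 1) := by ring

theorem pow_row_zero {n : ℕ} (P : Matrix (Fin n) (Fin n) ℝ) (tgt : Fin n → ℝ) (e : ℝ)
    (hst : ∀ j, ∑ i, tgt i * P i j = tgt j) (z : Fin n)
    (hz : ∀ j, P z j = (1 - e) * (if j = z then 1 else 0) + e * tgt j) (t : ℕ) (j : Fin n) :
    (P ^ t) z j - tgt j = (1 - e) ^ t * ((if j = z then 1 else 0) - tgt j) := by
  induction t generalizing j with
  | zero => simp [Matrix.one_apply, eq_comm (a := z)]
  | succ t ih =>
    have h : ∀ k, (P ^ t) z k = (1 - e) ^ t * (if k = z then 1 else 0) +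
      (1 - (1 - e) ^ t) * tgt k := fun k => by linarith [ih k]
    simp only [pow_succ, Matrix.mul_apply, h, add_mul, mul_assoc, Finset.sum_add_distrib,
      ← Finset.mul_sum, hst, ite_mul, one_mul, zero_mul, Finset.sum_ite_eq', Finset.mem_univ,
      if_true, hz]
    ring

/-- for the IMH chain on the finite state space `{1, …, m}` (here `Fin (m+2)`,
`m + 2 ≥ 2`, state `1` being index `0`), with `w` nonincreasing so `w* = w₁`,
`(1 − π₁)(1 − 1/w*)ᵗ ≤ d(t) ≤ (1 − 1/w*)ᵗ` for every `t ≥ 1`. -/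
theorem imh_finite_exact_rate (m : ℕ) (tgt prp : Fin (m + 2) → ℝ)
    (htgt_pos : ∀ i, 0 < tgt i) (hprp_pos : ∀ i, 0 < prp i)
    (htgt_sum : ∑ i, tgt i = 1) (hprp_sum : ∑ i, prp i = 1)
    (hmono : ∀ i j : Fin (m + 2), i ≤ j → tgt j / prp j ≤ tgt i / prp i) :
    ∀ t : ℕ, 1 ≤ t →
      (1 - tgt 0) * (1 - 1 / (tgt 0 / prp 0)) ^ t ≤
          (⨆ i, tvFin ((imhMatrix tgt prp ^ t) i) tgt)
        ∧ (⨆ i, tvFin ((imhMatrix tgt prp ^ t) i) tgt) ≤ (1 - 1 / (tgt 0 / prp 0)) ^ t := by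
  have hm : ∀ i, tgt i / prp i ≤ tgt 0 / prp 0 := fun i => hmono 0 i (Fin.zero_le i)
  have hw := div_pos (htgt_pos 0) (hprp_pos 0)
  have hw1 : 1 ≤ tgt 0 / prp 0 := by
    have h : ∑ i, tgt i ≤ ∑ i, tgt 0 / prp 0 * prp i :=
      Finset.sum_le_sum fun i _ => (div_le_iff₀ (hprp_pos i)).1 (hm i)
    rwa [← Finset.mul_sum, htgt_sum, hprp_sum, mul_one] at h
  have he : 0 ≤ 1 - 1 / (tgt 0 / prp 0) := sub_nonneg.2 ((div_le_one hw).2 hw1)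
  have hst := imh_stat tgt prp htgt_pos hprp_pos hprp_sum
  intro t _
  constructor
  · refine le_trans (le_of_eq ?_) (le_ciSup (Set.finite_range _).bddAbove 0)
    unfold tvFin
    simp only [pow_row_zero _ tgt _ hst 0
      (imh_row_zero tgt prp htgt_pos hprp_pos htgt_sum hprp_sum hm), abs_mul,
      abs_of_nonneg (pow_nonneg he t), ← Finset.mul_sum, tv_delta tgt htgt_pos htgt_sum]
    ring
  · refine ciSup_le fun i => ?_
    have := contraction _ tgt _ htgt_pos htgt_sum he
      (imh_row_sum tgt prp htgt_pos hprp_pos hprp_sum) hst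
      (imh_minor tgt prp htgt_pos hprp_pos _ hm hw1) t i
    unfold tvFin
    linarith
end

section
/- Fix an integer K ≥ 2 and consider the Markov chain on {1, …, 2K} with transition matrix P(i,j) = 1/(2K) for j ≤ K with j ≠ i, P(i,j) = 0 for j > K with j ≠ i, P(i,i) = 1/2 + 1/(2K) if i ≤ K, and P(i,i) = 1/2 if i > K (this is the IMH chain with target uniform on {1,…,K} and proposal uniform on {1,…,2K}, for which w* = 2). Let π be uniform on {1,…,K}, i.e. π_j = 1/K for j ≤ K and π_j = 0 for j > K. Then for every t ≥ 1: ‖P^t(i,·) − π‖_TV = (1 − 1/K)·(1/2)^t for every i ≤ K, and ‖P^t(j,·) − π‖_TV = (1/2)^t for every j > K; hence max_i ‖P^t(i,·) − π‖_TV = (1 − 1/w*)^t with w* = 2. -/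
/-- the explicit IMH chain with target uniform on `{1,…,K}` and proposal
uniform on `{1,…,2K}` (states indexed by `Fin (2K)`, state `j` of `{1,…,2K}` being
index `j − 1`). -/
noncomputable def halfUnifChain (K : ℕ) : Matrix (Fin (2 * K)) (Fin (2 * K)) ℝ :=
  Matrix.of fun i j =>
    if (j : ℕ) < K then (if j = i then 1 / 2 + 1 / (2 * (K : ℝ)) else 1 / (2 * (K : ℝ)))
    else (if j = i then 1 / 2 else 0)

/-- The uniform pmf on the first `K` of the `2K` states. -/
noncomputable def halfUnifTgt (K : ℕ) : Fin (2 * K) → ℝ :=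
  fun j => if (j : ℕ) < K then 1 / (K : ℝ) else 0

lemma sum_halfUnifTgt (K : ℕ) (hK : 2 ≤ K) : ∑ j, halfUnifTgt K j = 1 := by
  have hK0 : (K : ℝ) ≠ 0 := by positivity
  have h := Fin.sum_univ_eq_sum_range (fun j : ℕ => if j < K then 1 / (K : ℝ) else 0) (2 * K)
  simp only [halfUnifTgt]
  rw [h, two_mul, Finset.sum_range_add]
  have h1 : ∑ x ∈ Finset.range K, (if x < K then 1 / (K : ℝ) else 0) = 1 := by
    rw [Finset.sum_congr rfl (fun x hx => if_pos (Finset.mem_range.1 hx))]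
    simp [hK0]
  rw [h1]
  simp

lemma halfUnifChain_apply (K : ℕ) (i j : Fin (2 * K)) :
    halfUnifChain K i j = (1 / 2) * (if j = i then 1 else 0) + (1 / 2) * halfUnifTgt K j := by
  simp only [halfUnifChain, halfUnifTgt, Matrix.of_apply]
  split_ifs <;> ring

lemma halfUnifChain_pow_apply (K : ℕ) (hK : 2 ≤ K) (t : ℕ) (i j : Fin (2 * K)) :
    (halfUnifChain K ^ t) i j
      = (1 / 2) ^ t * (if j = i then 1 else 0) + (1 - (1 / 2) ^ t) * halfUnifTgt K j := by
  induction t generalizing j with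
  | zero => simp [Matrix.one_apply, eq_comm]
  | succ t ih =>
    rw [pow_succ, Matrix.mul_apply]
    simp only [ih, halfUnifChain_apply]
    have : ∀ x : Fin (2 * K),
        ((1 / 2 : ℝ) ^ t * (if x = i then 1 else 0) + (1 - (1 / 2) ^ t) * halfUnifTgt K x)
          * ((1 / 2) * (if j = x then 1 else 0) + (1 / 2) * halfUnifTgt K j)
        = (if x = i then (1 / 2 : ℝ) ^ t *
            ((1 / 2) * (if j = x then 1 else 0) + (1 / 2) * halfUnifTgt K j) else 0)
          + (if j = x then (1 - (1 / 2) ^ t) * halfUnifTgt K x * (1 / 2) else 0)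
          + (1 - (1 / 2) ^ t) * (1 / 2) * halfUnifTgt K j * halfUnifTgt K x := by
      intro x
      split_ifs <;> ring
    rw [Finset.sum_congr rfl (fun x _ => this x), Finset.sum_add_distrib,
      Finset.sum_add_distrib, ← Finset.mul_sum, sum_halfUnifTgt K hK]
    simp only [Finset.sum_ite_eq, Finset.sum_ite_eq', Finset.mem_univ, if_true]
    ring

lemma tv_halfUnifChain (K : ℕ) (hK : 2 ≤ K) (t : ℕ) (i : Fin (2 * K)) :
    tvFin ((halfUnifChain K ^ t) i) (halfUnifTgt K) = (1 - halfUnifTgt K i) * (1 / 2) ^ t := by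
  have hK0 : (2 : ℝ) ≤ K := by exact_mod_cast hK
  have h0 : ∀ j, 0 ≤ halfUnifTgt K j := by
    intro j; simp only [halfUnifTgt]; split_ifs <;> positivity
  have h1 : ∀ j, halfUnifTgt K j ≤ 1 := by
    intro j; simp only [halfUnifTgt]; split_ifs
    · rw [div_le_one (by linarith)]; linarith
    · norm_num
  have key : ∀ j, |(halfUnifChain K ^ t) i j - halfUnifTgt K j|
      = (1 / 2) ^ t * halfUnifTgt K j
        + (if j = i then (1 / 2) ^ t * (1 - 2 * halfUnifTgt K j) else 0) := by
    intro j
    have e : (halfUnifChain K ^ t) i j - halfUnifTgt K j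
        = (1 / 2) ^ t * ((if j = i then 1 else 0) - halfUnifTgt K j) := by
      rw [halfUnifChain_pow_apply K hK]; ring
    rw [e, abs_mul, abs_of_nonneg (by positivity : (0 : ℝ) ≤ (1 / 2) ^ t)]
    split_ifs
    · rw [abs_of_nonneg (by linarith [h1 j])]; ring
    · rw [zero_sub, abs_neg, abs_of_nonneg (h0 j)]; ring
  rw [tvFin, Finset.sum_congr rfl (fun j _ => key j), Finset.sum_add_distrib, ← Finset.mul_sum,
    sum_halfUnifTgt K hK]
  simp only [Finset.sum_ite_eq', Finset.mem_univ, if_true]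
  ring

/-- for every `t ≥ 1`, `‖Pᵗ(i,·) − π‖_TV = (1 − 1/K)(1/2)ᵗ` for `i ≤ K`,
`‖Pᵗ(j,·) − π‖_TV = (1/2)ᵗ` for `j > K`; hence
`max_i ‖Pᵗ(i,·) − π‖_TV = (1 − 1/w*)ᵗ` with `w* = 2`. -/
theorem imh_uniform_example_tv (K : ℕ) (hK : 2 ≤ K) :
    ∀ t : ℕ, 1 ≤ t →
      (∀ i : Fin (2 * K), (i : ℕ) < K →
          tvFin ((halfUnifChain K ^ t) i) (halfUnifTgt K) = (1 - 1 / (K : ℝ)) * (1 / 2) ^ t)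
        ∧ (∀ j : Fin (2 * K), K ≤ (j : ℕ) →
          tvFin ((halfUnifChain K ^ t) j) (halfUnifTgt K) = (1 / 2) ^ t)
        ∧ (⨆ i, tvFin ((halfUnifChain K ^ t) i) (halfUnifTgt K)) = (1 - 1 / (2 : ℝ)) ^ t := by
  intro t _
  have hK0 : (2 : ℝ) ≤ K := by exact_mod_cast hK
  simp only [tv_halfUnifChain K hK]
  refine ⟨fun i hi => by simp [halfUnifTgt, hi],
    fun j hj => by simp [halfUnifTgt, Nat.not_lt.2 hj], ?_⟩
  haveI : Nonempty (Fin (2 * K)) := ⟨⟨K, by omega⟩⟩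
  have h2 : (1 - 1 / (2 : ℝ)) ^ t = (1 / 2) ^ t := by norm_num
  rw [h2]
  apply le_antisymm
  · apply ciSup_le
    intro i
    have h0 : 0 ≤ halfUnifTgt K i := by
      simp only [halfUnifTgt]; split_ifs <;> positivity
    have hp : (0 : ℝ) ≤ (1 / 2) ^ t := by positivity
    nlinarith
  · refine le_trans (le_of_eq ?_) (le_ciSup (Set.finite_range _).bddAbove
      (⟨K, by omega⟩ : Fin (2 * K)))
    simp [halfUnifTgt]
end

section
/- Fix an integer K ≥ 2 and consider the IMH chain on {1, …, K+1} with target π given by π₁ = 1/2 and π_i = 1/(2K) for 2 ≤ i ≤ K+1, and proposal p given by p₁ = 1/4 and p_i = 3/(4K) for 2 ≤ i ≤ K+1 (so w₁ = 2 = w* and w_i = 2/3 for i ≠ 1), with transition matrix P(i,j) = p_j·min(1, w_j/w_i) for j ≠ i and P(i,i) = p_i + Σ_k p_k·max(0, 1 − w_k/w_i), where w_i = π_i/p_i. Then for every t ≥ 1 and every state i, ‖P^t(i,·) − π‖_TV = (1/2)^{t+1}; hence max_i ‖P^t(i,·) − π‖_TV = (1 − π₁)·(1 − 1/w*)^t.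 -/
/-- the target pmf on `{1, …, K+1}` (indexed by `Fin (K+1)`, state `1` being
index `0`): `π₁ = 1/2`, `π_i = 1/(2K)` otherwise. -/
noncomputable def tgt13 (K : ℕ) : Fin (K + 1) → ℝ :=
  fun i => if i = 0 then 1 / 2 else 1 / (2 * (K : ℝ))

/-- The proposal pmf: `p₁ = 1/4`, `p_i = 3/(4K)` otherwise. -/
noncomputable def prp13 (K : ℕ) : Fin (K + 1) → ℝ :=
  fun i => if i = 0 then 1 / 4 else 3 / (4 * (K : ℝ))

/-- Sign function separating state `0` from the others. -/
noncomputable def sgn13 (K : ℕ) : Fin (K + 1) → ℝ := fun i => if i = 0 then 1 else -1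

lemma imh_entry (K : ℕ) (hK : 2 ≤ K) (i j : Fin (K + 1)) :
    imhMatrix (tgt13 K) (prp13 K) i j = tgt13 K j * (1 + sgn13 K i * sgn13 K j * (1 / 2)) := by
  have hK0 : (K : ℝ) ≠ 0 := by positivity
  have w0 : tgt13 K 0 / prp13 K 0 = 2 := by norm_num [tgt13, prp13]
  have w1 : ∀ k : Fin (K + 1), k ≠ 0 → tgt13 K k / prp13 K k = 2 / 3 := by
    intro k hk
    simp only [tgt13, prp13, hk, if_false]
    field_simp
    norm_num
  have w1s : ∀ k : Fin K, tgt13 K k.succ / prp13 K k.succ = 2 / 3 :=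
    fun k => w1 _ (Fin.succ_ne_zero k)
  simp only [imhMatrix, Matrix.of_apply, Fin.sum_univ_succ, w1s, w0]
  by_cases hi : i = 0 <;> by_cases hj : j = 0
  · subst hi; subst hj
    rw [if_pos rfl, w0]
    norm_num [tgt13, prp13, sgn13]
    field_simp
    norm_num
  · subst hi
    rw [if_neg hj, w0, w1 j hj]
    norm_num [tgt13, prp13, sgn13, hj]
    field_simp
    norm_num
  · subst hj
    rw [if_neg (Ne.symm hi), w1 i hi, w0]
    norm_num [tgt13, prp13, sgn13, hi]
  · rw [w1 i hi, w1 j hj]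
    norm_num [tgt13, prp13, sgn13, hi, hj]
    field_simp
    norm_num

lemma imh_pow_entry (K : ℕ) (hK : 2 ≤ K) (t : ℕ) (i j : Fin (K + 1)) :
    (imhMatrix (tgt13 K) (prp13 K) ^ (t + 1)) i j
      = tgt13 K j * (1 + sgn13 K i * sgn13 K j * (1 / 2) ^ (t + 1)) := by
  have hK0 : (K : ℝ) ≠ 0 := by positivity
  induction t generalizing i j with
  | zero => simpa using imh_entry K hK i j
  | succ t ih =>
    rw [pow_succ, Matrix.mul_apply]
    simp only [ih, imh_entry K hK]
    rw [Fin.sum_univ_succ]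
    simp only [tgt13, sgn13, Fin.succ_ne_zero, if_false, if_true, Finset.sum_const,
      Finset.card_univ, Fintype.card_fin, nsmul_eq_mul]
    field_simp
    ring

lemma imh_tv (K : ℕ) (hK : 2 ≤ K) (t : ℕ) (i : Fin (K + 1)) :
    tvFin ((imhMatrix (tgt13 K) (prp13 K) ^ (t + 1)) i) (tgt13 K) = (1 / 2) ^ (t + 1 + 1) := by
  have hK0 : (K : ℝ) ≠ 0 := by positivity
  have h : ∀ j, |(imhMatrix (tgt13 K) (prp13 K) ^ (t + 1)) i j - tgt13 K j|
      = tgt13 K j * (1 / 2) ^ (t + 1) := by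
    intro j
    have hs : ∀ k, |sgn13 K k| = 1 := by
      intro k; unfold sgn13; split_ifs <;> simp
    have hp : 0 ≤ tgt13 K j := by unfold tgt13; split_ifs <;> positivity
    rw [imh_pow_entry K hK, show ∀ a b : ℝ, a * (1 + b) - a = a * b by intros; ring,
      abs_mul, abs_mul, abs_mul, hs, hs, abs_of_nonneg hp,
      abs_of_nonneg (by positivity : (0 : ℝ) ≤ (1 / 2) ^ (t + 1))]
    ring
  unfold tvFin
  simp only [h]
  rw [← Finset.sum_mul, Fin.sum_univ_succ]
  simp only [tgt13, Fin.succ_ne_zero, if_false, if_true, Finset.sum_const,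
      Finset.card_univ, Fintype.card_fin, nsmul_eq_mul]
  field_simp
  ring

/-- for this IMH chain (for which `w₁ = 2 = w*`), for every `t ≥ 1` and every
state `i`, `‖Pᵗ(i,·) − π‖_TV = (1/2)^{t+1}`; hence
`max_i ‖Pᵗ(i,·) − π‖_TV = (1 − π₁)(1 − 1/w*)ᵗ`. -/
theorem imh_lower_example_tv (K : ℕ) (hK : 2 ≤ K) :
    ∀ t : ℕ, 1 ≤ t →
      (∀ i : Fin (K + 1),
          tvFin ((imhMatrix (tgt13 K) (prp13 K) ^ t) i) (tgt13 K) = (1 / 2) ^ (t + 1))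
        ∧ (⨆ i, tvFin ((imhMatrix (tgt13 K) (prp13 K) ^ t) i) (tgt13 K)) =
            (1 - tgt13 K 0) * (1 - 1 / (tgt13 K 0 / prp13 K 0)) ^ t := by
  intro t ht
  obtain ⟨t, rfl⟩ : ∃ s, t = s + 1 := ⟨t - 1, by omega⟩
  refine ⟨fun i => imh_tv K hK t i, ?_⟩
  simp only [imh_tv K hK t, ciSup_const]
  have h1 : tgt13 K 0 = 1 / 2 := by simp [tgt13]
  have h2 : prp13 K 0 = 1 / 4 := by simp [prp13]
  rw [h1, h2]
  norm_num
  ring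
end

section
/- For the IMH transition matrix P on the finite state space X = {1, …, m}: the vector of all ones is a right eigenvector with eigenvalue λ₀ = 1; for each k = 1, …, m−1, the vector v_k ∈ ℝ^m with (v_k)_i = 0 for i < k, (v_k)_k = S_π(k+1) := Σ_{j=k+1}^m π_j, and (v_k)_i = −π_k for i > k, is a right eigenvector of P with eigenvalue λ_k = Σ_{i=k}^m (p_i − π_i/w_k); the eigenvalues satisfy 1 > λ₁ ≥ λ₂ ≥ … ≥ λ_{m−1} ≥ 0; and the eigenvectors are π-orthogonal, i.e. Σ_l (v_i)_l·(v_j)_l·π_l = 0 whenever i ≠ j. -/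
/-- Eigenvalue `λ_k = Σ_{i=k}^m (p_i − π_i/w_k)` of the IMH matrix (0-indexed: the
eigen-index `κ` corresponds to the original index `k = κ + 1`, and original state `i`
corresponds to index `i − 1`). -/
noncomputable def imhEigVal {n : ℕ} (tgt prp : Fin n → ℝ) (κ : Fin n) : ℝ :=
  ∑ i, if κ ≤ i then prp i - tgt i / (tgt κ / prp κ) else 0

/-- Eigenvector `v_k = (0, …, 0, S_π(k+1), −π_k, …, −π_k)ᵀ` of the IMH matrix
(0-indexed as in `imhEigVal`), where `S_π(k+1) = Σ_{j=k+1}^m π_j`. -/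
noncomputable def imhEigVec {n : ℕ} (tgt prp : Fin n → ℝ) (κ : Fin n) : Fin n → ℝ :=
  fun i => if i < κ then 0
    else if i = κ then ∑ j, (if κ < j then tgt j else 0)
    else -tgt κ

section helpers

variable {n : ℕ} (tgt prp : Fin n → ℝ)

/-- Acceptance-weighted proposal. -/
noncomputable def imhAcc (i j : Fin n) : ℝ :=
  prp j * min 1 ((tgt j / prp j) / (tgt i / prp i))

theorem imh_mulVec (htgt_pos : ∀ i, 0 < tgt i) (hprp_pos : ∀ i, 0 < prp i)
    (hprp_sum : ∑ i, prp i = 1) (v : Fin n → ℝ) (i : Fin n) :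
    (imhMatrix tgt prp).mulVec v i = v i + ∑ j, imhAcc tgt prp i j * (v j - v i) := by
  have hmax : ∑ k, prp k * max 0 (1 - (tgt k / prp k) / (tgt i / prp i))
      = 1 - ∑ k, imhAcc tgt prp i k := by
    have h1 : (1 : ℝ) - ∑ k, imhAcc tgt prp i k = ∑ k, (prp k - imhAcc tgt prp i k) := by
      rw [Finset.sum_sub_distrib, hprp_sum]
    rw [h1]
    refine Finset.sum_congr rfl fun k _ => ?_
    unfold imhAcc
    rcases le_total ((tgt k / prp k) / (tgt i / prp i)) 1 with h | h
    · rw [min_eq_right h, max_eq_right (by linarith)]; ring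
    · rw [min_eq_left h, max_eq_left (by linarith)]; ring
  have hpt : ∀ j, imhMatrix tgt prp i j * v j = imhAcc tgt prp i j * v j
      + if j = i then (1 - ∑ k, imhAcc tgt prp i k) * v i else 0 := by
    intro j
    have hw : 0 < tgt i / prp i := div_pos (htgt_pos i) (hprp_pos i)
    by_cases hj : j = i
    · subst hj
      simp only [imhMatrix, Matrix.of_apply, if_true]
      rw [hmax]
      have : imhAcc tgt prp j j = prp j := by
        unfold imhAcc
        rw [div_self hw.ne']; simp
      rw [this]; ring
    · simp [imhMatrix, Matrix.of_apply, hj, imhAcc]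
  have : (imhMatrix tgt prp).mulVec v i = ∑ j, imhMatrix tgt prp i j * v j := rfl
  rw [this, Finset.sum_congr rfl (fun j _ => hpt j), Finset.sum_add_distrib]
  simp only [Finset.sum_ite_eq', Finset.mem_univ, if_true, mul_sub, Finset.sum_sub_distrib,
    ← Finset.sum_mul]
  ring

theorem imhAcc_le (htgt_pos : ∀ i, 0 < tgt i) (hprp_pos : ∀ i, 0 < prp i)
    (hmono : ∀ i j : Fin n, i ≤ j → tgt j / prp j ≤ tgt i / prp i)
    {i j : Fin n} (h : j ≤ i) : imhAcc tgt prp i j = prp j := by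
  have hw : 0 < tgt i / prp i := div_pos (htgt_pos i) (hprp_pos i)
  unfold imhAcc
  rw [min_eq_left ((one_le_div hw).2 (hmono _ _ h)), mul_one]

theorem imhAcc_ge (htgt_pos : ∀ i, 0 < tgt i) (hprp_pos : ∀ i, 0 < prp i)
    (hmono : ∀ i j : Fin n, i ≤ j → tgt j / prp j ≤ tgt i / prp i)
    {i j : Fin n} (h : i ≤ j) : imhAcc tgt prp i j = tgt j / (tgt i / prp i) := by
  have hw : 0 < tgt i / prp i := div_pos (htgt_pos i) (hprp_pos i)
  unfold imhAcc
  rw [min_eq_right ((div_le_one hw).2 (hmono _ _ h)), ← mul_div_assoc,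
    mul_div_cancel₀ _ (hprp_pos j).ne']

/-- Tail sum. -/
noncomputable def imhS (κ : Fin n) : ℝ := ∑ j, (if κ < j then tgt j else 0)

/-- Head sum. -/
noncomputable def imhA (κ : Fin n) : ℝ := ∑ j, (if j < κ then prp j else 0)

theorem imhVec_lt {κ i : Fin n} (h : i < κ) : imhEigVec tgt prp κ i = 0 := by
  simp [imhEigVec, h]

theorem imhVec_self {κ : Fin n} : imhEigVec tgt prp κ κ = imhS tgt κ := by
  simp [imhEigVec, imhS]

theorem imhVec_gt {κ i : Fin n} (h : κ < i) : imhEigVec tgt prp κ i = -tgt κ := by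
  simp [imhEigVec, h.not_gt, h.ne']

theorem imhVec_sum (κ : Fin n) : ∑ l, imhEigVec tgt prp κ l * tgt l = 0 := by
  have hpt : ∀ l, imhEigVec tgt prp κ l * tgt l =
      (if l = κ then imhS tgt κ * tgt κ else 0) - tgt κ * (if κ < l then tgt l else 0) := by
    intro l
    rcases lt_trichotomy l κ with h | h | h
    · simp [imhVec_lt _ _ h, h.ne, h.not_gt]
    · subst h; simp [imhVec_self]
    · simp [imhVec_gt _ _ h, h.ne', h]
  rw [Finset.sum_congr rfl (fun l _ => hpt l), Finset.sum_sub_distrib, ← Finset.mul_sum]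
  simp only [Finset.sum_ite_eq', Finset.mem_univ, if_true]
  unfold imhS; ring

theorem imhVal_eq (hprp_sum : ∑ i, prp i = 1) (κ : Fin n) :
    imhEigVal tgt prp κ =
      1 - imhA prp κ - (imhS tgt κ + tgt κ) / (tgt κ / prp κ) := by
  have hpt : ∀ i, (if κ ≤ i then prp i - tgt i / (tgt κ / prp κ) else 0) =
      prp i - (if i < κ then prp i else 0) - (tgt κ / prp κ)⁻¹ *
        ((if κ < i then tgt i else 0) + if i = κ then tgt κ else 0) := by
    intro i
    rcases lt_trichotomy i κ with h | h | h
    · simp [h, h.ne, h.not_gt, h.not_ge]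
    · subst h; simp only [le_refl, lt_irrefl, if_true, if_false]; ring
    · simp only [h, h.ne', h.not_gt, h.le, if_true, if_false]; ring
  unfold imhEigVal
  rw [Finset.sum_congr rfl (fun l _ => hpt l), Finset.sum_sub_distrib, Finset.sum_sub_distrib,
    ← Finset.mul_sum, Finset.sum_add_distrib, hprp_sum]
  simp only [Finset.sum_ite_eq', Finset.mem_univ, if_true]
  unfold imhS imhA; ring

theorem imh_eig (htgt_pos : ∀ i, 0 < tgt i) (hprp_pos : ∀ i, 0 < prp i)
    (hprp_sum : ∑ i, prp i = 1)
    (hmono : ∀ i j : Fin n, i ≤ j → tgt j / prp j ≤ tgt i / prp i) (κ : Fin n) :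
    (imhMatrix tgt prp).mulVec (imhEigVec tgt prp κ) =
      imhEigVal tgt prp κ • imhEigVec tgt prp κ := by
  have hle := @imhAcc_le n tgt prp htgt_pos hprp_pos hmono
  have hge := @imhAcc_ge n tgt prp htgt_pos hprp_pos hmono
  funext i
  rw [imh_mulVec tgt prp htgt_pos hprp_pos hprp_sum, Pi.smul_apply, smul_eq_mul,
    imhVal_eq tgt prp hprp_sum]
  rcases lt_trichotomy i κ with h | h | h
  · rw [imhVec_lt _ _ h]
    have hpt : ∀ j, imhAcc tgt prp i j * (imhEigVec tgt prp κ j - 0) =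
        (tgt i / prp i)⁻¹ * (imhEigVec tgt prp κ j * tgt j) := by
      intro j
      rcases lt_or_ge j κ with hj | hj
      · simp [imhVec_lt _ _ hj]
      · rw [hge (h.le.trans hj)]; ring
    rw [Finset.sum_congr rfl (fun l _ => hpt l), ← Finset.mul_sum, imhVec_sum]
    ring
  · subst h
    rw [imhVec_self]
    have hpt : ∀ j, imhAcc tgt prp i j * (imhEigVec tgt prp i j - imhS tgt i) =
        -imhS tgt i * (if j < i then prp j else 0)
          - (imhS tgt i + tgt i) / (tgt i / prp i) * (if i < j then tgt j else 0) := by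
      intro j
      rcases lt_trichotomy j i with hj | hj | hj
      · rw [imhVec_lt _ _ hj, hle hj.le]; simp [hj, hj.not_gt]; ring
      · subst hj; simp [imhVec_self]
      · rw [imhVec_gt _ _ hj, hge hj.le]; simp only [hj, hj.not_gt, if_true, if_false]; ring
    rw [Finset.sum_congr rfl (fun l _ => hpt l), Finset.sum_sub_distrib, ← Finset.mul_sum,
      ← Finset.mul_sum]
    change imhS tgt i + (-imhS tgt i * imhA prp i - _ * imhS tgt i) = _
    ring
  · rw [imhVec_gt _ _ h]
    have hpt : ∀ j, imhAcc tgt prp i j * (imhEigVec tgt prp κ j - -tgt κ) =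
        tgt κ * (if j < κ then prp j else 0)
          + (if j = κ then prp κ * (imhS tgt κ + tgt κ) else 0) := by
      intro j
      rcases lt_trichotomy j κ with hj | hj | hj
      · rw [imhVec_lt _ _ hj, hle (hj.trans h).le]; simp [hj, hj.ne]; ring
      · subst hj; rw [hle h.le]; simp [imhVec_self]
      · rw [imhVec_gt _ _ hj]; simp [hj.ne', hj.not_gt]
    rw [Finset.sum_congr rfl (fun l _ => hpt l), Finset.sum_add_distrib, ← Finset.mul_sum]
    simp only [Finset.sum_ite_eq', Finset.mem_univ, if_true]
    change -tgt κ + (tgt κ * imhA prp κ + _) = _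
    have := (htgt_pos κ).ne'
    have := (hprp_pos κ).ne'
    field_simp
    ring

theorem imh_term_nonneg (htgt_pos : ∀ i, 0 < tgt i) (hprp_pos : ∀ i, 0 < prp i)
    (hmono : ∀ i j : Fin n, i ≤ j → tgt j / prp j ≤ tgt i / prp i) {κ i : Fin n} (h : κ ≤ i) :
    0 ≤ prp i - tgt i / (tgt κ / prp κ) := by
  have hw : 0 < tgt κ / prp κ := div_pos (htgt_pos κ) (hprp_pos κ)
  rw [sub_nonneg, div_le_iff₀ hw, mul_comm, ← div_le_iff₀ (hprp_pos i)]
  exact hmono _ _ h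

theorem imh_orth {κ κ' : Fin n} (h : κ < κ') :
    ∑ l, imhEigVec tgt prp κ l * imhEigVec tgt prp κ' l * tgt l = 0 := by
  have hpt : ∀ l, imhEigVec tgt prp κ l * imhEigVec tgt prp κ' l * tgt l =
      -tgt κ * (imhEigVec tgt prp κ' l * tgt l) := by
    intro l
    rcases lt_or_ge l κ' with hl | hl
    · simp [imhVec_lt _ _ hl]
    · rw [imhVec_gt _ _ (h.trans_le hl)]; ring
  rw [Finset.sum_congr rfl (fun l _ => hpt l), ← Finset.mul_sum, imhVec_sum, mul_zero]

end helpers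

/-- Liu: spectral decomposition of the finite IMH transition matrix on
`{1, …, m}` (here `Fin (m+2)`): the all-ones vector is a right eigenvector with eigenvalue
`1`; for `k = 1, …, m−1` (indices `κ` with `κ + 1 < m + 2`), `v_k` is a right eigenvector
with eigenvalue `λ_k`; `1 > λ₁ ≥ λ₂ ≥ … ≥ λ_{m−1} ≥ 0`; and the eigenvectors are
`π`-orthogonal. -/
theorem imh_finite_eigen (m : ℕ) (tgt prp : Fin (m + 2) → ℝ)
    (htgt_pos : ∀ i, 0 < tgt i) (hprp_pos : ∀ i, 0 < prp i)
    (htgt_sum : ∑ i, tgt i = 1) (hprp_sum : ∑ i, prp i = 1)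
    (hmono : ∀ i j : Fin (m + 2), i ≤ j → tgt j / prp j ≤ tgt i / prp i) :
    ((imhMatrix tgt prp).mulVec (fun _ => (1 : ℝ)) = fun _ => (1 : ℝ))
    ∧ (∀ κ : Fin (m + 2), (κ : ℕ) + 1 < m + 2 →
        (imhMatrix tgt prp).mulVec (imhEigVec tgt prp κ) =
          imhEigVal tgt prp κ • imhEigVec tgt prp κ)
    ∧ (∀ κ : Fin (m + 2), (κ : ℕ) + 1 < m + 2 → imhEigVal tgt prp κ < 1)
    ∧ (∀ κ κ' : Fin (m + 2), (κ : ℕ) + 1 < m + 2 → (κ' : ℕ) + 1 < m + 2 → κ ≤ κ' →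
        imhEigVal tgt prp κ' ≤ imhEigVal tgt prp κ)
    ∧ (∀ κ : Fin (m + 2), (κ : ℕ) + 1 < m + 2 → 0 ≤ imhEigVal tgt prp κ)
    ∧ (∀ κ κ' : Fin (m + 2), (κ : ℕ) + 1 < m + 2 → (κ' : ℕ) + 1 < m + 2 → κ ≠ κ' →
        ∑ l, imhEigVec tgt prp κ l * imhEigVec tgt prp κ' l * tgt l = 0) := by
  refine ⟨?_, ?_, ?_, ?_, ?_, ?_⟩
  · funext i
    rw [imh_mulVec tgt prp htgt_pos hprp_pos hprp_sum]
    simp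
  · intro κ _
    exact imh_eig tgt prp htgt_pos hprp_pos hprp_sum hmono κ
  · intro κ _
    rw [imhVal_eq tgt prp hprp_sum]
    have hA : 0 ≤ imhA prp κ := Finset.sum_nonneg fun j _ => by
      split_ifs
      · exact (hprp_pos j).le
      · exact le_rfl
    have hS : 0 ≤ imhS tgt κ := Finset.sum_nonneg fun j _ => by
      split_ifs
      · exact (htgt_pos j).le
      · exact le_rfl
    have : 0 < (imhS tgt κ + tgt κ) / (tgt κ / prp κ) :=
      div_pos (by linarith [htgt_pos κ]) (div_pos (htgt_pos κ) (hprp_pos κ))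
    linarith
  · intro κ κ' _ _ h
    refine Finset.sum_le_sum fun i _ => ?_
    by_cases h1 : κ' ≤ i
    · rw [if_pos h1, if_pos (h.trans h1)]
      exact sub_le_sub_left (div_le_div_of_nonneg_left (htgt_pos i).le
        (div_pos (htgt_pos κ') (hprp_pos κ')) (hmono _ _ h)) _
    · rw [if_neg h1]
      split_ifs with h2
      · exact imh_term_nonneg tgt prp htgt_pos hprp_pos hmono h2
      · exact le_rfl
  · intro κ _
    refine Finset.sum_nonneg fun i _ => ?_
    split_ifs with h2
    · exact imh_term_nonneg tgt prp htgt_pos hprp_pos hmono h2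
    · exact le_rfl
  · intro κ κ' _ _ h
    rcases lt_or_gt_of_ne h with h | h
    · exact imh_orth tgt prp h
    · rw [← imh_orth tgt prp h]
      exact Finset.sum_congr rfl fun l _ => by ring
end

section
/- Let A be an n×n real matrix with A·u_j = λ_j·u_j for j = 1, …, n, where u_1, …, u_n form a basis of ℝⁿ, and let u ∈ ℝⁿ. Set B = A + u_n·uᵀ. Then the characteristic polynomial of B equals (X − λ_n − uᵀu_n)·∏_{j=1}^{n−1}(X − λ_j), so the eigenvalues of B, counted with multiplicity, are λ_1, …, λ_{n−1}, λ_n + uᵀu_n; moreover B·u_n = (λ_n + uᵀu_n)·u_n. -/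
/-- rank-one perturbation: if `A·u_j = λ_j·u_j` for `j = 1, …, n` where
`u_1, …, u_n` form a basis of `ℝⁿ`, and `B = A + u_n·uᵀ`, then the characteristic polynomial
of `B` equals `(X − λ_n − uᵀu_n)·∏_{j=1}^{n−1}(X − λ_j)` (so the eigenvalues of `B`, with
multiplicity, are `λ_1, …, λ_{n−1}, λ_n + uᵀu_n`), and moreover
`B·u_n = (λ_n + uᵀu_n)·u_n`. -/
theorem rank_one_perturbation (n : ℕ) (A : Matrix (Fin (n + 1)) (Fin (n + 1)) ℝ)
    (lam : Fin (n + 1) → ℝ) (U : Fin (n + 1) → (Fin (n + 1) → ℝ))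
    (heig : ∀ j, A.mulVec (U j) = lam j • U j)
    (hbasis : LinearIndependent ℝ U)
    (u : Fin (n + 1) → ℝ) :
    (A + Matrix.vecMulVec (U (Fin.last n)) u).charpoly =
        (Polynomial.X - Polynomial.C (lam (Fin.last n) + ∑ i, u i * U (Fin.last n) i)) *
          ∏ j : Fin n, (Polynomial.X - Polynomial.C (lam j.castSucc))
      ∧ (A + Matrix.vecMulVec (U (Fin.last n)) u).mulVec (U (Fin.last n)) =
          (lam (Fin.last n) + ∑ i, u i * U (Fin.last n) i) • U (Fin.last n) := by
  have key : ∀ j, (A + Matrix.vecMulVec (U (Fin.last n)) u).mulVec (U j) =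
      lam j • U j + (∑ i, u i * U j i) • U (Fin.last n) := by
    intro j
    rw [Matrix.add_mulVec, heig]
    congr 1
    ext k
    simp only [Matrix.mulVec, dotProduct, Matrix.vecMulVec_apply, Pi.smul_apply, smul_eq_mul,
      Finset.sum_mul]
    exact Finset.sum_congr rfl fun i _ => by ring
  refine ⟨?_, by rw [key, add_smul]⟩
  set B := A + Matrix.vecMulVec (U (Fin.last n)) u with hB
  let b := basisOfLinearIndependentOfCardEqFinrank hbasis (by simp)
  have hb : ∀ j, b j = U j := fun j => by simp [b]
  have hM : ∀ i j, LinearMap.toMatrix b b B.toLin' i j =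
      (if i = j then lam j else 0) +
        (if i = Fin.last n then ∑ k, u k * U j k else 0) := by
    intro i j
    rw [LinearMap.toMatrix_apply, Matrix.toLin'_apply, hb, key, ← hb j, ← hb (Fin.last n)]
    simp [Finsupp.single_apply, eq_comm]
  have hlow : (LinearMap.toMatrix b b B.toLin').charmatrix.BlockTriangular OrderDual.toDual := by
    intro i j hij
    have hij' : i < j := hij
    rw [Matrix.charmatrix_apply_ne _ _ _ hij'.ne, hM, if_neg hij'.ne,
      if_neg (hij'.trans_le (Fin.le_last j)).ne]
    simp
  rw [← Matrix.charpoly_toLin', ← LinearMap.charpoly_toMatrix B.toLin' b, Matrix.charpoly,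
    Matrix.det_of_lowerTriangular _ hlow, Fin.prod_univ_castSucc, mul_comm]
  congr 1
  · rw [Matrix.charmatrix_apply_eq, hM]
    simp
  · refine Finset.prod_congr rfl fun j _ => ?_
    rw [Matrix.charmatrix_apply_eq, hM, if_neg (Fin.castSucc_lt_last j).ne]
    simp
end

section
/- Consider the Random Walk Metropolis–Hastings chain on ℝ with standard Cauchy target density π(x) = 1/(π(1+x²)) and proposal Uniform[x−1, x+1], i.e. the kernel P(x, A) = (1/2)·∫_{x−1}^{x+1} min(π(y)/π(x), 1)·1_A(y) dy + R(x)·1_A(x), where R(x) = 1 − (1/2)·∫_{x−1}^{x+1} min(π(y)/π(x), 1) dy is the rejection probability. Then: (1) R(x) ≤ 3/4 for every x ∈ ℝ, so sup_x R(x) < 1; (2) for every x₀ ∈ ℝ and every n ≥ 1, ‖P^n(x₀,·) − π‖_TV ≥ 1/(2π(|x₀| + n)); consequently, for every x₀ there exist no r ∈ (0,1) and constant C(x₀) with ‖P^n(x₀,·) − π‖_TV ≤ C(x₀)·r^n for all n ≥ 1, i.e. the chain is not geometrically ergodic even though the rejection probability is bounded away from 1. -/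
open MeasureTheory

/-- The standard Cauchy density `x ↦ 1/(π(1 + x²))`. -/
noncomputable def cauchyTgt : ℝ → ℝ := fun x => 1 / (Real.pi * (1 + x ^ 2))


lemma aux_ratio (x y : ℝ) : cauchyTgt y / cauchyTgt x = (1 + x ^ 2) / (1 + y ^ 2) := by
  unfold cauchyTgt
  have := Real.pi_pos
  have h1 : 0 < 1 + x ^ 2 := by positivity
  have h2 : 0 < 1 + y ^ 2 := by positivity
  field_simp

lemma aux_cont (x : ℝ) : Continuous (fun y => min (cauchyTgt y / cauchyTgt x) 1) := by
  simp only [aux_ratio]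
  refine Continuous.min ?_ continuous_const
  refine Continuous.div continuous_const (by fun_prop) ?_
  intro y
  positivity

lemma aux_nonneg (x y : ℝ) : 0 ≤ min (cauchyTgt y / cauchyTgt x) 1 := by
  rw [aux_ratio]
  positivity

lemma aux_half_s19 (x y : ℝ) (h : 1 + y ^ 2 ≤ 2 * (1 + x ^ 2)) :
    1 / 2 ≤ min (cauchyTgt y / cauchyTgt x) 1 := by
  rw [aux_ratio]
  refine le_min ?_ (by norm_num)
  rw [div_le_div_iff₀ (by norm_num) (by positivity)]
  linarith

lemma aux_R (x : ℝ) : rwmhR cauchyTgt 1 x ≤ 3 / 4 := by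
  unfold rwmhR
  have hi : ∀ a b : ℝ, IntervalIntegrable (fun y => min (cauchyTgt y / cauchyTgt x) 1) volume a b :=
    fun a b => (aux_cont x).intervalIntegrable a b
  have hs := intervalIntegral.integral_add_adjacent_intervals (hi (x - 1) x) (hi x (x + 1))
  have key : 1 / 2 ≤ ∫ y in (x - 1)..(x + 1), min (cauchyTgt y / cauchyTgt x) 1 := by
    rw [← hs]
    have n1 : 0 ≤ ∫ y in (x - 1)..x, min (cauchyTgt y / cauchyTgt x) 1 :=
      intervalIntegral.integral_nonneg (by linarith) (fun y _ => aux_nonneg x y)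
    have n2 : 0 ≤ ∫ y in x..(x + 1), min (cauchyTgt y / cauchyTgt x) 1 :=
      intervalIntegral.integral_nonneg (by linarith) (fun y _ => aux_nonneg x y)
    rcases le_total 0 x with hx | hx
    · have : ∫ y in (x - 1)..x, (1 / 2 : ℝ) ≤
          ∫ y in (x - 1)..x, min (cauchyTgt y / cauchyTgt x) 1 := by
        refine intervalIntegral.integral_mono_on (by linarith) (by simp) (hi _ _) ?_
        intro y hy
        apply aux_half_s19
        rcases le_total 0 y with h0 | h0
        · nlinarith [hy.1, hy.2]
        · nlinarith [hy.1, hy.2]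
      rw [intervalIntegral.integral_const] at this
      simp only [smul_eq_mul] at this
      linarith
    · have : ∫ y in x..(x + 1), (1 / 2 : ℝ) ≤
          ∫ y in x..(x + 1), min (cauchyTgt y / cauchyTgt x) 1 := by
        refine intervalIntegral.integral_mono_on (by linarith) (by simp) (hi _ _) ?_
        intro y hy
        apply aux_half_s19
        rcases le_total 0 y with h0 | h0
        · nlinarith [hy.1, hy.2]
        · nlinarith [hy.1, hy.2]
      rw [intervalIntegral.integral_const] at this
      simp only [smul_eq_mul] at this
      linarith
  linarith

lemma aux_P_univ (x : ℝ) : rwmhP cauchyTgt 1 x Set.univ ≤ 2 := by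
  unfold rwmhP
  rw [Measure.add_apply, withDensity_apply _ MeasurableSet.univ, Measure.restrict_univ]
  have h1 : ∫⁻ y, ENNReal.ofReal ((1 / (2 * 1)) * (Set.Icc (x - 1) (x + 1)).indicator
      (fun z => min (cauchyTgt z / cauchyTgt x) 1) y) ≤ 1 := by
    calc _ ≤ ∫⁻ y, (Set.Icc (x - 1) (x + 1)).indicator (fun _ => ENNReal.ofReal (1 / 2)) y := by
          apply lintegral_mono
          intro y
          by_cases hy : y ∈ Set.Icc (x - 1) (x + 1)
          · simp only [Set.indicator_of_mem hy]
            apply ENNReal.ofReal_le_ofReal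
            have := min_le_right (cauchyTgt y / cauchyTgt x) 1
            linarith
          · simp [Set.indicator_of_notMem hy]
      _ = ENNReal.ofReal (1 / 2) * ENNReal.ofReal 2 := by
          rw [lintegral_indicator_const measurableSet_Icc, Real.volume_Icc]
          congr 2
          ring
      _ = 1 := by
          rw [← ENNReal.ofReal_mul (by norm_num)]
          norm_num
  have h2 : (ENNReal.ofReal (rwmhR cauchyTgt 1 x) • Measure.dirac x) Set.univ ≤ 1 := by
    simp only [Measure.smul_apply, measure_univ, smul_eq_mul, mul_one]
    exact ENNReal.ofReal_le_one.2 ((aux_R x).trans (by norm_num))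
  calc _ ≤ (1 : ENNReal) + 1 := add_le_add h1 h2
    _ = 2 := by norm_num

lemma aux_P_supp (x M : ℝ) (hx : x ∈ Set.Icc (-M) M) :
    rwmhP cauchyTgt 1 x (Set.Icc (-(M + 1)) (M + 1))ᶜ = 0 := by
  unfold rwmhP
  rw [Measure.add_apply, withDensity_apply _ measurableSet_Icc.compl]
  have hx' := hx
  obtain ⟨ha, hb⟩ := hx'
  have h1 : x ∉ (Set.Icc (-(M + 1)) (M + 1))ᶜ := by
    simp only [Set.mem_compl_iff, not_not]
    constructor <;> linarith
  rw [Measure.smul_apply, Measure.dirac_apply' _ measurableSet_Icc.compl,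
    Set.indicator_of_notMem h1, smul_zero, add_zero]
  refine (setLIntegral_congr_fun measurableSet_Icc.compl (g := fun _ => 0) ?_).trans (by simp)
  intro y hy
  have : y ∉ Set.Icc (x - 1) (x + 1) := by
    intro h
    apply hy
    constructor <;> linarith [h.1, h.2]
  simp [Set.indicator_of_notMem this]

lemma aux_bind (μ : Measure ℝ) (P : ℝ → Measure ℝ) {s : Set ℝ} (hs : MeasurableSet s) :
    (μ.bind P) s ≤ ∫⁻ x, P x s ∂μ := by
  by_cases h : AEMeasurable P μ
  · rw [Measure.bind_apply hs h]
  · rw [Measure.bind, Measure.map_of_not_aemeasurable h]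
    simp

lemma aux_fin (x₀ : ℝ) (n : ℕ) : kiter (rwmhP cauchyTgt 1) n x₀ Set.univ < ⊤ := by
  induction n with
  | zero => simp [kiter]
  | succ n ih =>
    rw [kiter]
    refine (aux_bind _ _ MeasurableSet.univ).trans_lt ?_
    refine (lintegral_mono aux_P_univ).trans_lt ?_
    rw [lintegral_const]
    exact ENNReal.mul_lt_top (by simp) ih

lemma aux_supp (x₀ : ℝ) (n : ℕ) : kiter (rwmhP cauchyTgt 1) n x₀
    (Set.Icc (-(|x₀| + n)) (|x₀| + n))ᶜ = 0 := by
  induction n with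
  | zero =>
    rw [kiter, Measure.dirac_apply' _ measurableSet_Icc.compl, Set.indicator_of_notMem]
    simp only [Set.mem_compl_iff, not_not, Nat.cast_zero, add_zero]
    exact ⟨neg_abs_le x₀, le_abs_self x₀⟩
  | succ n ih =>
    rw [kiter]
    refine le_antisymm ((aux_bind _ _ measurableSet_Icc.compl).trans ?_) zero_le
    refine le_of_eq ((lintegral_congr_ae (g := fun _ => 0) ?_).trans (by simp))
    have : ∀ᵐ x ∂(kiter (rwmhP cauchyTgt 1) n x₀), x ∈ Set.Icc (-(|x₀| + n)) (|x₀| + n) := ih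
    filter_upwards [this] with x hx
    have := aux_P_supp x _ hx
    push_cast
    rwa [← add_assoc]

lemma aux_int : Integrable cauchyTgt := by
  have : cauchyTgt = fun x => (Real.pi)⁻¹ * (1 + x ^ 2)⁻¹ := by
    ext x
    simp [cauchyTgt, mul_inv, mul_comm]
  rw [this]
  exact integrable_inv_one_add_sq.const_mul _

lemma aux_pos (x : ℝ) : 0 ≤ cauchyTgt x := by
  unfold cauchyTgt
  have := Real.pi_pos
  positivity

lemma aux_dens (s : Set ℝ) (hs : MeasurableSet s) :
    densityMeasure cauchyTgt s = ENNReal.ofReal (∫ x in s, cauchyTgt x) := by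
  unfold densityMeasure
  rw [withDensity_apply _ hs, ofReal_integral_eq_lintegral_ofReal aux_int.integrableOn]
  exact Filter.Eventually.of_forall aux_pos

lemma aux_tail (M : ℝ) (hM : 1 ≤ M) :
    1 / (2 * Real.pi * M) ≤ ∫ x in Set.Ioi M, cauchyTgt x := by
  have h0 : (0 : ℝ) < M := by linarith
  have hpi := Real.pi_pos
  have hint : IntegrableOn (fun x : ℝ => x ^ (-2 : ℝ)) (Set.Ioi M) :=
    integrableOn_Ioi_rpow_of_lt (by norm_num) h0
  have hv : ∫ x in Set.Ioi M, (2 * Real.pi)⁻¹ * x ^ (-2 : ℝ) = 1 / (2 * Real.pi * M) := by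
    rw [integral_const_mul, integral_Ioi_rpow_of_lt (by norm_num) h0]
    norm_num
    rw [Real.rpow_neg_one]
    ring
  rw [← hv]
  refine setIntegral_mono_on (hint.const_mul _) aux_int.integrableOn measurableSet_Ioi ?_
  intro x hx
  have hx' : M < x := hx
  have hxp : 0 < x := by linarith
  rw [Real.rpow_neg hxp.le, Real.rpow_two, ← mul_inv, cauchyTgt, one_div]
  apply inv_anti₀ (by positivity)
  have : 1 + x ^ 2 ≤ 2 * x ^ 2 := by nlinarith
  nlinarith

lemma aux_tv (x₀ : ℝ) (n : ℕ) (hn : 1 ≤ n) :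
    1 / (2 * Real.pi * (|x₀| + n)) ≤
      tvDist (kiter (rwmhP cauchyTgt 1) n x₀) (densityMeasure cauchyTgt) := by
  set μ := kiter (rwmhP cauchyTgt 1) n x₀ with hμ
  set ν := densityMeasure cauchyTgt with hν
  have hf1 : IsFiniteMeasure μ := ⟨aux_fin x₀ n⟩
  have hf2 : IsFiniteMeasure ν := ⟨by
    rw [hν, aux_dens _ MeasurableSet.univ]
    exact ENNReal.ofReal_lt_top⟩
  have hn' : (1 : ℝ) ≤ n := by exact_mod_cast hn
  have hM : 1 ≤ |x₀| + n := by linarith [abs_nonneg x₀]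
  have hbdd : BddAbove (Set.range fun A : {s : Set ℝ // MeasurableSet s} =>
      |(μ A.1).toReal - (ν A.1).toReal|) := by
    refine ⟨(μ Set.univ).toReal + (ν Set.univ).toReal, ?_⟩
    rintro _ ⟨A, rfl⟩
    have a1 : (μ A.1).toReal ≤ (μ Set.univ).toReal :=
      ENNReal.toReal_mono (measure_ne_top _ _) (measure_mono (Set.subset_univ _))
    have a2 : (ν A.1).toReal ≤ (ν Set.univ).toReal :=
      ENNReal.toReal_mono (measure_ne_top _ _) (measure_mono (Set.subset_univ _))
    have a3 : 0 ≤ (μ A.1).toReal := ENNReal.toReal_nonneg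
    have a4 : 0 ≤ (ν A.1).toReal := ENNReal.toReal_nonneg
    simp only
    rw [abs_le]
    constructor <;> linarith
  have hle := le_ciSup hbdd ⟨Set.Ioi (|x₀| + n), measurableSet_Ioi⟩
  refine le_trans ?_ hle
  have hz : μ (Set.Ioi (|x₀| + n)) = 0 := by
    refine measure_mono_null ?_ (aux_supp x₀ n)
    intro y hy h
    exact absurd h.2 (not_le.2 hy)
  have ht := aux_tail _ hM
  have hp : 0 ≤ ∫ x in Set.Ioi (|x₀| + (n : ℝ)), cauchyTgt x :=
    integral_nonneg aux_pos
  simp only [hz, hν, aux_dens _ measurableSet_Ioi, ENNReal.toReal_zero, zero_sub, abs_neg]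
  rw [ENNReal.toReal_ofReal hp, abs_of_nonneg hp]
  exact ht

lemma aux_geo (x₀ : ℝ) : ¬ ∃ (r : ℝ) (C : ℝ), 0 < r ∧ r < 1 ∧ 0 ≤ C ∧
    ∀ n : ℕ, 1 ≤ n →
      tvDist (kiter (rwmhP cauchyTgt 1) n x₀) (densityMeasure cauchyTgt) ≤ C * r ^ n := by
  rintro ⟨r, C, hr0, hr1, hC, h⟩
  have t1 := tendsto_self_mul_const_pow_of_lt_one hr0.le hr1
  have t2 := tendsto_pow_atTop_nhds_zero_of_lt_one hr0.le hr1
  have t3 := ((t2.const_mul |x₀|).add t1).const_mul (2 * Real.pi * C)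
  simp only [mul_zero, add_zero] at t3
  have e := t3.eventually (gt_mem_nhds (zero_lt_one))
  obtain ⟨n, hn, hn1⟩ := (e.and (Filter.eventually_ge_atTop 1)).exists
  have hn' : (1 : ℝ) ≤ n := by exact_mod_cast hn1
  have hM : 0 < |x₀| + n := by linarith [abs_nonneg x₀]
  have hpi := Real.pi_pos
  have := (aux_tv x₀ n hn1).trans (h n hn1)
  rw [div_le_iff₀ (by positivity)] at this
  nlinarith

/-- for the RWMH chain with standard Cauchy target and proposal
`Uniform[x−1, x+1]`:
(1) `R(x) ≤ 3/4` for every `x`, so the rejection probability is bounded away from `1`;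
(2) `‖Pⁿ(x₀,·) − π‖_TV ≥ 1/(2π(|x₀| + n))` for every `x₀` and `n ≥ 1`;
consequently the chain is not geometrically ergodic: for every `x₀` there are no `r ∈ (0,1)`
and constant `C(x₀) ≥ 0` with `‖Pⁿ(x₀,·) − π‖_TV ≤ C(x₀)·rⁿ` for all `n ≥ 1`. -/
theorem rwmh_cauchy_not_geometrically_ergodic :
    (∀ x : ℝ, rwmhR cauchyTgt 1 x ≤ 3 / 4)
    ∧ (∀ x₀ : ℝ, ∀ n : ℕ, 1 ≤ n →
        1 / (2 * Real.pi * (|x₀| + n)) ≤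
          tvDist (kiter (rwmhP cauchyTgt 1) n x₀) (densityMeasure cauchyTgt))
    ∧ (∀ x₀ : ℝ, ¬ ∃ (r : ℝ) (C : ℝ), 0 < r ∧ r < 1 ∧ 0 ≤ C ∧
        ∀ n : ℕ, 1 ≤ n →
          tvDist (kiter (rwmhP cauchyTgt 1) n x₀) (densityMeasure cauchyTgt) ≤ C * r ^ n) := by
  exact ⟨aux_R, aux_tv, aux_geo⟩
end
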